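/- arXiv:2210.06214 — 2 statements merged into one kernel-verified Lean document; each statement's English description precedes it below -/
import Mathlib

section
/- For every positive integer v, if there exists an RDSQS(v + 1) (a Steiner quadruple system of order v + 1 whose derived design at every point is resolvable), then there exists an LKTS(3v) (a large set of Kirkman triple systems of order 3v). -/
open Finset

/-- A parallel class on point set `Y`: a collection of blocks that partitions `Y`. -/
def IsParallelClass (Y : Finset ℕ) (P : Finset (Finset ℕ)) : Prop :=
  (∀ b ∈ P, b ⊆ Y) ∧ ∀ y ∈ Y, ∃! b, b ∈ P ∧ y ∈ b

/-- A block collection `B` on point set `Y` is resolvable if it can be partitioned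
into parallel classes of `Y`. -/
def Resolvable (Y : Finset ℕ) (B : Finset (Finset ℕ)) : Prop :=
  ∃ (r : ℕ) (P : Fin r → Finset (Finset ℕ)),
    (∀ i, IsParallelClass Y (P i)) ∧ (∀ i, P i ⊆ B) ∧ ∀ b ∈ B, ∃! i, b ∈ P i

/-- The blocks of the derived design at a point `x`:
`{B \ {x} : x ∈ B, B ∈ B}`. -/
def derivedBlocks (B : Finset (Finset ℕ)) (x : ℕ) : Finset (Finset ℕ) :=
  (B.filter fun b => x ∈ b).image fun b => b.erase x

/-- A Steiner system S(t, k, v) on point set `X` with block collection `B`. -/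
def IsSteiner (t k v : ℕ) (X : Finset ℕ) (B : Finset (Finset ℕ)) : Prop :=
  X.card = v ∧ (∀ b ∈ B, b ⊆ X ∧ b.card = k) ∧
  ∀ T ⊆ X, T.card = t → ∃! b, b ∈ B ∧ T ⊆ b

/-- An RDS(t, k, v): a Steiner system S(t, k, v) whose derived design at every
point is resolvable. -/
def IsRDS (t k v : ℕ) (X : Finset ℕ) (B : Finset (Finset ℕ)) : Prop :=
  IsSteiner t k v X B ∧ ∀ x ∈ X, Resolvable (X.erase x) (derivedBlocks B x)

/-- Existence of an RDS(t, k, v). -/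
def ExistsRDS (t k v : ℕ) : Prop := ∃ X B, IsRDS t k v X B

/-- Existence of an RDSQS(v), i.e. an RDS(3, 4, v). -/
def ExistsRDSQS (v : ℕ) : Prop := ExistsRDS 3 4 v

/-- A Kirkman triple system KTS(v): a resolvable Steiner triple system. -/
def IsKTS (v : ℕ) (X : Finset ℕ) (B : Finset (Finset ℕ)) : Prop :=
  IsSteiner 2 3 v X B ∧ Resolvable X B

/-- Existence of a large set of Kirkman triple systems LKTS(v): a partition of
all 3-element subsets of a v-element set into v - 2 classes, each a KTS(v). -/
def ExistsLKTS (v : ℕ) : Prop :=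
  ∃ (X : Finset ℕ) (C : Fin (v - 2) → Finset (Finset ℕ)),
    X.card = v ∧ (∀ i, IsKTS v X (C i)) ∧
    (∀ T : Finset ℕ, (T ⊆ X ∧ T.card = 3) ↔ ∃ i, T ∈ C i) ∧
    ∀ (T : Finset ℕ) (i j : Fin (v - 2)), T ∈ C i → T ∈ C j → i = j

/-- A t-wise balanced design S(t, K, v) with block sizes from the set `K`. -/
def IsTBD (t : ℕ) (K : Set ℕ) (v : ℕ) (X : Finset ℕ) (B : Finset (Finset ℕ)) : Prop :=
  X.card = v ∧ (∀ b ∈ B, b ⊆ X ∧ b.card ∈ K) ∧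
  ∀ T ⊆ X, T.card = t → ∃! b, b ∈ B ∧ T ⊆ b

/-- A group divisible design GDD(t, K, g*n) of type g^n: `Gs` is a partition of
`X` into `n` groups of size `g`; blocks have sizes in `K`, meet every group in
at most one point, and every t-subset of `X` meeting every group in at most one
point lies in exactly one block. -/
def IsGDD (t : ℕ) (K : Set ℕ) (g n : ℕ) (X : Finset ℕ)
    (Gs Bs : Finset (Finset ℕ)) : Prop :=
  X.card = g * n ∧ Gs.card = n ∧
  (∀ G ∈ Gs, G ⊆ X ∧ G.card = g) ∧
  (∀ x ∈ X, ∃! G, G ∈ Gs ∧ x ∈ G) ∧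
  (∀ b ∈ Bs, b ⊆ X ∧ b.card ∈ K) ∧
  (∀ b ∈ Bs, ∀ G ∈ Gs, (b ∩ G).card ≤ 1) ∧
  ∀ T ⊆ X, T.card = t → (∀ G ∈ Gs, (T ∩ G).card ≤ 1) → ∃! b, b ∈ Bs ∧ T ⊆ b

/-- An RDGDD(t, K, g*n) of type g^n: a GDD whose derived design at every point
(on point set `X \ G`, where `G` is the group of the point) is resolvable. -/
def IsRDGDD (t : ℕ) (K : Set ℕ) (g n : ℕ) (X : Finset ℕ)
    (Gs Bs : Finset (Finset ℕ)) : Prop :=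
  IsGDD t K g n X Gs Bs ∧
  ∀ x ∈ X, ∀ G ∈ Gs, x ∈ G → Resolvable (X \ G) (derivedBlocks Bs x)

/-- An RDSQS*(v): an SQS(v) with v ≡ 1 (mod 3) such that, for every point `x`,
the derived blocks at `x` contain a parallel class `P'` (enumerated by `Bk`);
the multiset consisting of each triple of `P'` three times and each remaining
derived triple twice can be partitioned into (v-1) parallel classes
`P k l` (k ranging over Fin ((v-1)/3), l over Fin 3); and for each `k` the three
parallel classes `P k l` share the common triple `Bk k`. -/
def IsRDSQSstar (v : ℕ) (X : Finset ℕ) (B : Finset (Finset ℕ)) : Prop :=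
  IsSteiner 3 4 v X B ∧ v % 3 = 1 ∧
  ∀ x ∈ X, ∃ (P' : Finset (Finset ℕ)) (Bk : Fin ((v - 1) / 3) → Finset ℕ)
    (P : Fin ((v - 1) / 3) → Fin 3 → Finset (Finset ℕ)),
    P' ⊆ derivedBlocks B x ∧
    IsParallelClass (X.erase x) P' ∧
    (∀ k, Bk k ∈ P') ∧
    (∀ b ∈ P', ∃ k, Bk k = b) ∧
    Function.Injective Bk ∧
    (∀ k l, IsParallelClass (X.erase x) (P k l)) ∧
    ((∑ k, ∑ l, (P k l).val) =
        3 • P'.val + 2 • ((derivedBlocks B x) \ P').val) ∧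
    ∀ k l, Bk k ∈ P k l

/-!
Let `V` be the point set of the quadruple system and fix distinct points `∞` and `ω`. Replace each
point by three copies, then delete two copies of `∞` and one copy of `ω`; this leaves `3v` points.
The systems are indexed by the `3v - 2` points that are not copies of `ω`. The system of a copy of
`x` is a union of sets of triples, one for each block through `x`, living on the copies of the
points of that block. There are four kinds of blocks, according to which of `∞` and `ω` they
contain, and for each kind the triples are explicit; on the blocks through both points they form
the cyclic large set of Kirkman triple systems on nine points. A resolution of the derived design
at `x` with `(v - 1) / 2` classes distributes these triples over `3 (v - 1) / 2` parallel classes,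
and the blocks through `x` and `∞` contribute one more.

It suffices that every pair is covered in each system, that every point is covered in each class
and that no triple is used twice: by counting the triples through a pair, all covers are then
exact.
-/

/-! ### Large sets from covers -/

section Counting

variable {α β S L : Type*} {Y : Finset α} {P : S → L → Set (Finset α)}

/-- A family of sets of triples of `Y`, indexed by systems `s : S` and classes `l : L`, such that no
triple occurs under two indices, every system covers all pairs of points and every class covers all
points. When `#Y = |S| + 2 = 2 |L| + 1` the covers are exact, and the family is a large set of
Kirkman triple systems. -/
structure IsKirkmanCover (Y : Finset α) (P : S → L → Set (Finset α)) : Prop where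
  subset : ∀ {s l T}, T ∈ P s l → T ⊆ Y
  card_eq_three : ∀ {s l T}, T ∈ P s l → #T = 3
  eq_of_mem : ∀ {s s' l l' T}, T ∈ P s l → T ∈ P s' l' → s = s' ∧ l = l'
  exists_mem_pair : ∀ s, ∀ p ∈ Y, ∀ q ∈ Y, p ≠ q → ∃ l, ∃ T ∈ P s l, p ∈ T ∧ q ∈ T
  exists_mem_point : ∀ s l, ∀ p ∈ Y, ∃ T ∈ P s l, p ∈ T

lemma IsKirkmanCover.map (h : IsKirkmanCover Y P) (g : α ↪ β) :
    IsKirkmanCover (Y.map g) fun s l => Finset.map g '' P s l where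
  subset := by
    rintro s l _ ⟨T, hT, rfl⟩
    exact map_subset_map.2 (h.subset hT)
  card_eq_three := by
    rintro s l _ ⟨T, hT, rfl⟩
    rw [card_map, h.card_eq_three hT]
  eq_of_mem := by
    rintro s s' l l' _ ⟨T, hT, rfl⟩ ⟨T', hT', heq⟩
    exact h.eq_of_mem hT (map_injective g heq ▸ hT')
  exists_mem_pair := by
    simp only [forall_mem_map]
    intro s p hp q hq hpq
    obtain ⟨l, T, hT, hpT, hqT⟩ := h.exists_mem_pair s p hp q hq (ne_of_apply_ne g hpq)
    exact ⟨l, T.map g, ⟨T, hT, rfl⟩, mem_map_of_mem g hpT, mem_map_of_mem g hqT⟩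
  exists_mem_point := by
    simp only [forall_mem_map]
    intro s l p hp
    obtain ⟨T, hT, hpT⟩ := h.exists_mem_point s l p hp
    exact ⟨T.map g, ⟨T, hT, rfl⟩, mem_map_of_mem g hpT⟩

lemma exists_eq_triple_of_card_eq_three [DecidableEq α] {T : Finset α} {p q : α} (hT : #T = 3)
    (hp : p ∈ T) (hq : q ∈ T) (hpq : p ≠ q) : ∃ r ∈ (T.erase p).erase q, T = {p, q, r} := by
  have hq' : q ∈ T.erase p := mem_erase.2 ⟨hpq.symm, hq⟩
  obtain ⟨r, hr⟩ : ∃ r, (T.erase p).erase q = {r} := by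
    rw [← card_eq_one, card_erase_of_mem hq', card_erase_of_mem hp, hT]
  refine ⟨r, by simp [hr], ?_⟩
  rw [← hr, insert_erase hq', insert_erase hp]

lemma card_filter_triples_le [DecidableEq α] (Y : Finset α) {p q : α} (hp : p ∈ Y) (hq : q ∈ Y)
    (hpq : p ≠ q) :
    #{T ∈ Y.powersetCard 3 | p ∈ T ∧ q ∈ T} ≤ #Y - 2 := by
  have hsub : {T ∈ Y.powersetCard 3 | p ∈ T ∧ q ∈ T} ⊆
      ((Y.erase p).erase q).image fun r => {p, q, r} := by
    intro T hT
    obtain ⟨hT, hpT, hqT⟩ := mem_filter.1 hT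
    obtain ⟨hTY, hcard⟩ := mem_powersetCard.1 hT
    obtain ⟨r, hr, rfl⟩ := exists_eq_triple_of_card_eq_three hcard hpT hqT hpq
    exact mem_image_of_mem _ (erase_subset_erase _ (erase_subset_erase _ hTY) hr)
  calc _ ≤ #(((Y.erase p).erase q).image fun r => ({p, q, r} : Finset α)) := card_le_card hsub
    _ ≤ #((Y.erase p).erase q) := card_image_le
    _ = #Y - 2 := by
      rw [card_erase_of_mem (mem_erase.2 ⟨hpq.symm, hq⟩), card_erase_of_mem hp, Nat.sub_sub]

namespace IsKirkmanCover

variable [Fintype S]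

/-- The systems provide `|S|` distinct triples through `p` and `q`, and `Y` has only `#Y - 2` of
them. -/
lemma exists_transversal (h : IsKirkmanCover Y P) (hS : #Y = Fintype.card S + 2) {p q : α}
    (hp : p ∈ Y) (hq : q ∈ Y) (hpq : p ≠ q) :
    ∃ F : S → Finset α, (∀ s, ∃ l, F s ∈ P s l) ∧
      ∀ T ⊆ Y, #T = 3 → p ∈ T → q ∈ T → ∃ s, F s = T := by
  classical
  choose l F hF hpF hqF using fun s => h.exists_mem_pair s p hp q hq hpq
  have hinj : Function.Injective F := fun s s' hss' =>
    (h.eq_of_mem (hF s) (hss' ▸ hF s')).1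
  have hsub : univ.image F ⊆ {T ∈ Y.powersetCard 3 | p ∈ T ∧ q ∈ T} := by
    simp only [subset_iff, mem_image, mem_univ, true_and, forall_exists_index,
      forall_apply_eq_imp_iff, mem_filter, mem_powersetCard]
    exact fun s => ⟨⟨h.subset (hF s), h.card_eq_three (hF s)⟩, hpF s, hqF s⟩
  have heq : univ.image F = {T ∈ Y.powersetCard 3 | p ∈ T ∧ q ∈ T} := by
    refine eq_of_subset_of_card_le hsub ((card_filter_triples_le Y hp hq hpq).trans ?_)
    rw [card_image_of_injective _ hinj, card_univ, hS, Nat.add_sub_cancel]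
  refine ⟨F, fun s => ⟨l s, hF s⟩, fun T hTY hT hpT hqT => ?_⟩
  have hmem : T ∈ univ.image F := heq ▸ mem_filter.2 ⟨mem_powersetCard.2 ⟨hTY, hT⟩, hpT, hqT⟩
  simpa using hmem

lemma exists_mem (h : IsKirkmanCover Y P) (hS : #Y = Fintype.card S + 2) {T : Finset α}
    (hTY : T ⊆ Y) (hT : #T = 3) : ∃ s l, T ∈ P s l := by
  obtain ⟨p, hp, q, hq, hpq⟩ := one_lt_card.1 (by lia : 1 < #T)
  obtain ⟨F, hF, hsurj⟩ := h.exists_transversal hS (hTY hp) (hTY hq) hpq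
  obtain ⟨s, rfl⟩ := hsurj T hTY hT hp hq
  exact ⟨s, hF s⟩

lemma eq_of_pair_mem (h : IsKirkmanCover Y P) (hS : #Y = Fintype.card S + 2) {s : S} {l l' : L}
    {T T' : Finset α} {p q : α} (hT : T ∈ P s l) (hT' : T' ∈ P s l') (hpq : p ≠ q)
    (hp : p ∈ T) (hq : q ∈ T) (hp' : p ∈ T') (hq' : q ∈ T') : T = T' := by
  obtain ⟨F, hF, hsurj⟩ := h.exists_transversal hS (h.subset hT hp) (h.subset hT hq) hpq
  have eq_F : ∀ {l U}, U ∈ P s l → p ∈ U → q ∈ U → U = F s := by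
    intro l U hU hpU hqU
    obtain ⟨s', rfl⟩ := hsurj U (h.subset hU) (h.card_eq_three hU) hpU hqU
    obtain ⟨l', hs'⟩ := hF s'
    rw [(h.eq_of_mem hU hs').1]
  rw [eq_F hT hp hq, eq_F hT' hp' hq']

lemma eq_of_point_mem [Fintype L] (h : IsKirkmanCover Y P) (hS : #Y = Fintype.card S + 2)
    (hL : #Y = 2 * Fintype.card L + 1) {s : S} {l : L} {T T' : Finset α} {p : α}
    (hT : T ∈ P s l) (hT' : T' ∈ P s l) (hp : p ∈ T) (hp' : p ∈ T') : T = T' := by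
  classical
  have hpY : p ∈ Y := h.subset hT hp
  choose F hF hpF using fun l => h.exists_mem_point s l p hpY
  have hdisj : ∀ k k', k ≠ k' → Disjoint ((F k).erase p) ((F k').erase p) := by
    refine fun k k' hkk' => disjoint_left.2 fun q hq hq' => hkk' ?_
    obtain ⟨⟨hqp, hqk⟩, -, hqk'⟩ := And.intro (mem_erase.1 hq) (mem_erase.1 hq')
    have heq := h.eq_of_pair_mem hS (hF k) (hF k') hqp hqk (hpF k) hqk' (hpF k')
    exact (h.eq_of_mem (hF k) (heq ▸ hF k')).2
  have hfill : (univ.biUnion fun k => (F k).erase p) = Y.erase p := by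
    refine eq_of_subset_of_card_le
      (biUnion_subset.2 fun k _ => erase_subset_erase p (h.subset (hF k))) ?_
    have hcard : ∀ k, #((F k).erase p) = 2 := fun k => by
      rw [card_erase_of_mem (hpF k), h.card_eq_three (hF k)]
    rw [card_biUnion fun k _ k' _ => hdisj k k', card_erase_of_mem hpY, hL]
    simp [hcard, mul_comm]
  have eq_F : ∀ {U}, U ∈ P s l → p ∈ U → U = F l := by
    intro U hU hpU
    obtain ⟨q, hqU, hqp⟩ := exists_mem_ne (by rw [h.card_eq_three hU]; norm_num) p
    obtain ⟨k, -, hqk⟩ := mem_biUnion.1 (hfill ▸ mem_erase.2 ⟨hqp, h.subset hU hqU⟩)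
    have heq := h.eq_of_pair_mem hS hU (hF k) hqp hqU hpU (mem_of_mem_erase hqk) (hpF k)
    rw [(h.eq_of_mem hU (heq ▸ hF k)).2, heq]
  rw [eq_F hT hp, eq_F hT' hp']

end IsKirkmanCover

end Counting

section NaturalPoints

variable {S L : Type*} [Fintype S] {Y : Finset ℕ} {P : S → L → Set (Finset ℕ)}

lemma IsKirkmanCover.isSteiner (h : IsKirkmanCover Y P) (hS : #Y = Fintype.card S + 2) (s : S)
    [DecidablePred fun T => ∃ l, T ∈ P s l] :
    IsSteiner 2 3 #Y Y {T ∈ Y.powersetCard 3 | ∃ l, T ∈ P s l} := by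
  refine ⟨rfl, fun T hT => mem_powersetCard.1 (mem_filter.1 hT).1, fun A hA hcard => ?_⟩
  obtain ⟨p, q, hpq, rfl⟩ := card_eq_two.1 hcard
  obtain ⟨hp, hq⟩ : p ∈ Y ∧ q ∈ Y := by simpa [insert_subset_iff] using hA
  obtain ⟨l, T, hT, hpT, hqT⟩ := h.exists_mem_pair s p hp q hq hpq
  simp only [insert_subset_iff, singleton_subset_iff, mem_filter, mem_powersetCard]
  refine ⟨T, ⟨⟨⟨h.subset hT, h.card_eq_three hT⟩, l, hT⟩, hpT, hqT⟩, ?_⟩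
  rintro U ⟨⟨-, l', hU⟩, hpU, hqU⟩
  exact h.eq_of_pair_mem hS hU hT hpq hpU hqU hpT hqT

lemma IsKirkmanCover.resolvable [Fintype L] (h : IsKirkmanCover Y P) (hS : #Y = Fintype.card S + 2)
    (hL : #Y = 2 * Fintype.card L + 1) (s : S) [DecidablePred fun T => ∃ l, T ∈ P s l] :
    Resolvable Y {T ∈ Y.powersetCard 3 | ∃ l, T ∈ P s l} := by
  classical
  let e := Fintype.equivFin L
  have mem_class : ∀ {k T}, T ∈ {T ∈ Y.powersetCard 3 | T ∈ P s (e.symm k)} ↔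
      T ∈ P s (e.symm k) := by
    intro k T
    simp only [mem_filter, mem_powersetCard, and_iff_right_iff_imp]
    exact fun hT => ⟨h.subset hT, h.card_eq_three hT⟩
  refine ⟨Fintype.card L, fun k => {T ∈ Y.powersetCard 3 | T ∈ P s (e.symm k)},
    fun k => ⟨fun T hT => h.subset (mem_class.1 hT), fun p hp => ?_⟩,
    fun k => monotone_filter_right _ fun T _ hT => ⟨_, hT⟩, fun T hT => ?_⟩
  · obtain ⟨T, hT, hpT⟩ := h.exists_mem_point s (e.symm k) p hp
    exact ⟨T, ⟨mem_class.2 hT, hpT⟩, fun U ⟨hU, hpU⟩ =>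
      h.eq_of_point_mem hS hL (mem_class.1 hU) hT hpU hpT⟩
  · obtain ⟨-, l, hT⟩ := mem_filter.1 hT
    refine ⟨e l, mem_class.2 (by simpa using hT), fun k hk => ?_⟩
    rw [(h.eq_of_mem hT (mem_class.1 hk)).2, e.apply_symm_apply]

end NaturalPoints

lemma IsKirkmanCover.existsLKTS_card {α S L : Type*} [Fintype S] [Fintype L] [Countable α]
    {Y : Finset α} {P : S → L → Set (Finset α)} (h : IsKirkmanCover Y P)
    (hS : #Y = Fintype.card S + 2) (hL : #Y = 2 * Fintype.card L + 1) : ExistsLKTS #Y := by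
  classical
  obtain ⟨g, hg⟩ := exists_injective_nat α
  rw [← card_map ⟨g, hg⟩] at hS hL ⊢
  replace h := h.map ⟨g, hg⟩
  let e : Fin (#(Y.map ⟨g, hg⟩) - 2) ≃ S := (finCongr (by lia)).trans (Fintype.equivFin S).symm
  refine ⟨Y.map ⟨g, hg⟩, _, rfl, fun i => ⟨h.isSteiner hS (e i), h.resolvable hS hL (e i)⟩,
    fun T => ⟨fun ⟨hTY, hT⟩ => ?_, ?_⟩, fun T i j hi hj => ?_⟩
  · obtain ⟨s, l, hs⟩ := h.exists_mem hS hTY hT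
    exact ⟨e.symm s, mem_filter.2 ⟨mem_powersetCard.2 ⟨hTY, hT⟩, l, by simpa using hs⟩⟩
  · exact fun ⟨i, hi⟩ => mem_powersetCard.1 (mem_filter.1 hi).1
  · obtain ⟨⟨-, l, hi⟩, -, l', hj⟩ := And.intro (mem_filter.1 hi) (mem_filter.1 hj)
    exact e.injective (h.eq_of_mem hi hj).1

lemma existsLKTS_three : ExistsLKTS 3 := by
  have h : IsKirkmanCover (range 3) fun (_ _ : Unit) => {range 3} := {
    subset := by rintro _ _ _ rfl; rfl
    card_eq_three := by rintro _ _ _ rfl; rfl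
    eq_of_mem := fun _ _ => ⟨rfl, rfl⟩
    exists_mem_pair := fun _ p hp q hq _ => ⟨(), _, rfl, hp, hq⟩
    exists_mem_point := fun _ _ p hp => ⟨_, rfl, hp⟩ }
  exact h.existsLKTS_card rfl rfl

/-! ### The triples on a single block -/

/-- The points of the threefold expansion of a block whose points are numbered `0, 1, 2, 3`: the
cell `(n, j)` is the `j`-th copy of the point with number `n`. -/
abbrev Cell : Type := Fin 4 × Fin 3

/-- The cells present when the flag `w` says that position `2` holds the special point `ω` (whose
copy `0` is missing) and `f` says that position `3` holds `∞` (which has only copy `0`). -/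
def localPoints (w f : Bool) : Finset Cell :=
  {p | (f = true → p.1 = 3 → p.2 = 0) ∧ (w = true → p.1 = 2 → p.2 ≠ 0)}

/-- The cells that index a system of triples; no system belongs to `ω`. -/
def localSystems (w f : Bool) : Finset Cell :=
  {s | (f = true → s.1 = 3 → s.2 = 0) ∧ (w = true → s.1 ≠ 2)}

/-- One parallel class of a transversal design on the copies of `a`, of `b` and a third group
`z 0, z 1, z 2`: its triples have indices `j, l, m` with `j + l + m = σ` and `j - l = t`. -/
def transversalClass (a b : Fin 4) (z : Fin 3 → Cell) (σ t : Fin 3) : List (Finset Cell) :=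
  (List.finRange 3).map fun u => {(a, u - t), (b, u + t), z (σ + u)}

/-- The classes for a block without special points: the triples meeting the three positions other
than `s.1` whose indices sum to `-s.2`. -/
def ordinaryClass (s : Cell) : Option (Fin 3) → List (Finset Cell)
  | none => []
  | some t => transversalClass (s.1.succAbove 0) (s.1.succAbove 1) (s.1.succAbove 2, ·) (-s.2) t

/-- The classes for a block containing `ω` but not `∞`: the cell `s` takes the place of the missing
copy `(2, 0)`. -/
def omClass (s : Cell) : Option (Fin 3) → List (Finset Cell)
  | none => []
  | some t =>
    let z : Fin 3 → Cell := ![s, (2, 1), (2, 2)]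
    match s with
    | (0, i) => transversalClass 1 3 z (0 - i) t
    | (1, i) => transversalClass 0 3 z (1 - i) t
    | (2, _) => []
    | (3, i) => transversalClass 0 1 z (2 - i) t

/-- The classes of the system `(x, i)` on a block `{x, a, b, ∞}`. Together they cover the pairs
inside the copies of `a` and of `b`, besides the pairs on distinct positions other than `x`. -/
def triangleClass (x a b : Fin 4) (i : Fin 3) : Option (Fin 3) → List (Finset Cell)
  | none => [{(a, i + 1), (a, i + 2), (b, i)}, {(b, i + 1), (b, i + 2), (a, i)}]
  | some 0 => [{(a, i), (a, i + 2), (x, i + 2)}, {(b, i), (b, i + 1), (x, i + 1)},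
      {(a, i + 1), (b, i + 2), (3, 0)}]
  | some 1 => [{(a, i + 1), (b, i + 1), (x, i + 2)}, {(a, i + 2), (b, i + 2), (x, i + 1)},
      {(a, i), (b, i), (3, 0)}]
  | some 2 => [{(a, i), (a, i + 1), (x, i + 1)}, {(b, i), (b, i + 2), (x, i + 2)},
      {(a, i + 2), (b, i + 1), (3, 0)}]

/-- The classes for a block containing `∞` but not `ω`. -/
def infClass (s : Cell) (t : Option (Fin 3)) : List (Finset Cell) :=
  match s with
  | (0, i) => triangleClass 0 1 2 i t
  | (1, i) => triangleClass 1 2 0 i t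
  | (2, i) => triangleClass 2 0 1 i t
  | (3, _) => ordinaryClass s t

/-- Labels the cells of a block `{a, b, ω, ∞}` other than the two copies of `ω` by `ℤ/7`: the copies
of `a` and `b` become the squares and the nonsquares, and `∞` becomes `0`. -/
def residue : Cell → Fin 7
  | (0, i) => 2 ^ i.val
  | (1, i) => -2 ^ i.val
  | _ => 0

/-- The inverse of `residue`. -/
def ofResidue : Fin 7 → Cell :=
  ![(3, 0), (0, 0), (0, 1), (1, 2), (0, 2), (1, 1), (1, 0)]

/-- The classes of the cyclic large set of Kirkman triple systems on the nine points
`ℤ/7 ∪ {ω₁, ω₂}`. -/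
def nineClass (s : Fin 7) : Option (Fin 3) → List (Finset Cell)
  | none => [{(2, 1), (2, 2), ofResidue s},
      {ofResidue (s + 1), ofResidue (s + 2), ofResidue (s + 4)},
      {ofResidue (s - 1), ofResidue (s - 2), ofResidue (s - 4)}]
  | some t =>
      let c : Fin 7 := 2 ^ t.val
      [{ofResidue s, ofResidue (s + c), ofResidue (s - c)},
       {(2, 1), ofResidue (s + 2 * c), ofResidue (s + 3 * c)},
       {(2, 2), ofResidue (s - 2 * c), ofResidue (s - 3 * c)}]

/-- The triples that a block with flags `w` (contains `ω`) and `f` (contains `∞`) contributes to the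
class `t` of the system `s`. The class `none` is the one that does not depend on a resolution of the
derived designs. -/
def localClass : Bool → Bool → Cell → Option (Fin 3) → List (Finset Cell)
  | false, false, s, t => ordinaryClass s t
  | true, false, s, t => omClass s t
  | false, true, s, t => infClass s t
  | true, true, s, t => nineClass (residue s) t

/-- Some local triple of the system `s` contains both `p` and `q`. -/
def LocallyCovers (w f : Bool) (s p q : Cell) : Prop :=
  ∃ t, ∃ T ∈ localClass w f s t, p ∈ T ∧ q ∈ T

section LocalChecks

variable {w f : Bool} {s s' p q : Cell} {t t' : Option (Fin 3)} {T : Finset Cell}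

instance : Decidable (LocallyCovers w f s p q) :=
  inferInstanceAs (Decidable (∃ t, ∃ T ∈ localClass w f s t, p ∈ T ∧ q ∈ T))

-- Without this instance `decide` would let `T` range over all `2 ^ 12` sets of cells.
instance {C : List (Finset Cell)} {Q : Finset Cell → Prop} [DecidablePred Q] :
    Decidable (∀ T ∈ C, Q T) :=
  List.decidableBAll Q C

lemma card_of_mem_localClass : ∀ {w f : Bool}, ∀ {s}, s ∈ localSystems w f → ∀ {t T},
    T ∈ localClass w f s t → #T = 3 := by
  decide +kernel

lemma subset_localPoints_of_mem_localClass : ∀ {w f : Bool}, ∀ {s}, s ∈ localSystems w f →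
    ∀ {t T}, T ∈ localClass w f s t → T ⊆ localPoints w f := by
  decide +kernel

/-- The binary code of a set of cells, which the kernel compares faster than the set itself. -/
def binaryCode (T : Finset Cell) : ℕ :=
  ∑ p ∈ T, 2 ^ (3 * p.1.val + p.2.val)

lemma eq_of_binaryCode_mem : ∀ {w f : Bool}, ∀ {s}, s ∈ localSystems w f → ∀ {t T},
    T ∈ localClass w f s t → ∀ {s'}, s' ∈ localSystems w f → ∀ {t'},
    binaryCode T ∈ (localClass w f s' t').map binaryCode → s = s' ∧ t = t' := by
  decide +kernel

lemma eq_of_mem_localClass (hs : s ∈ localSystems w f) (hs' : s' ∈ localSystems w f)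
    (hT : T ∈ localClass w f s t) (hmem : T ∈ localClass w f s' t') : s = s' ∧ t = t' :=
  eq_of_binaryCode_mem hs hT hs' (List.mem_map_of_mem hmem)

/-- The only triple that does not determine its block, even after adding `∞` and `ω` to its support
when the block contains them, is `{ω₁, ω₂, ∞}`. -/
lemma localClass_spread : ∀ {w f : Bool}, ∀ {s}, s ∈ localSystems w f → ∀ {t T},
    T ∈ localClass w f s t → 3 ≤ #(T.image Prod.fst) ∨ f = true ∧
      (3 ≤ #(insert 3 (T.image Prod.fst)) ∨ w = true ∧
        (3 ≤ #(insert 2 (insert 3 (T.image Prod.fst))) ∨ T = {(2, 1), (2, 2), (3, 0)})) := by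
  decide +kernel

lemma locallyCovers_true_true : ∀ {s}, s ∈ localSystems true true →
    ∀ {p}, p ∈ localPoints true true → ∀ {q}, q ∈ localPoints true true → p ≠ q →
      LocallyCovers true true s p q := by
  decide +kernel

lemma locallyCovers_of_distinct : ∀ {w f : Bool}, ∀ {s}, s ∈ localSystems w f →
    ∀ {p}, p ∈ localPoints w f → ∀ {q}, q ∈ localPoints w f →
      p.1 ≠ s.1 → q.1 ≠ s.1 → p.1 ≠ q.1 → LocallyCovers w f s p q := by
  decide +kernel

lemma locallyCovers_of_fst_eq : ∀ {w : Bool}, ∀ {s}, s ∈ localSystems w true → s.1 ≠ 3 →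
    ∀ {p}, p ∈ localPoints w true → ∀ {q}, q ∈ localPoints w true →
      p.1 ≠ s.1 → p ≠ q → p.1 = q.1 → LocallyCovers w true s p q := by
  decide +kernel

lemma locallyCovers_of_system_fst_eq : ∀ {w : Bool}, ∀ {s}, s ∈ localSystems w true →
    ∀ {p}, p ∈ localPoints w true → ∀ {q}, q ∈ localPoints w true →
      p.1 ≠ s.1 → p.1 ≠ 3 → q.1 = s.1 → q.2 ≠ s.2 → LocallyCovers w true s p q := by
  decide +kernel

lemma locallyCovers_system : ∀ {f : Bool}, ∀ {s}, s ∈ localSystems true f →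
    ∀ {p}, p ∈ localPoints true f → p.1 ≠ s.1 → p.1 ≠ 2 → LocallyCovers true f s p s := by
  decide +kernel

lemma exists_mem_localClass_true_true : ∀ {s}, s ∈ localSystems true true →
    ∀ {p}, p ∈ localPoints true true → ∀ t, ∃ T ∈ localClass true true s t, p ∈ T := by
  decide +kernel

lemma exists_mem_localClass_none : ∀ {w : Bool}, ∀ {s}, s ∈ localSystems w true → s.1 ≠ 3 →
    ∀ {p}, p ∈ localPoints w true → p.1 ≠ s.1 → p.1 ≠ 3 →
      ∃ T ∈ localClass w true s none, p ∈ T := by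
  decide +kernel

lemma exists_mem_localClass_some : ∀ {w f : Bool}, ∀ {s}, s ∈ localSystems w f →
    ∀ {p}, p ∈ localPoints w f → p.1 ≠ s.1 → ∀ t, ∃ T ∈ localClass w f s (some t), p ∈ T := by
  decide +kernel

lemma exists_mem_localClass_some_of_fst_eq : ∀ {w : Bool}, ∀ {s}, s ∈ localSystems w true →
    ∀ {p}, p ∈ localPoints w true → p.1 = s.1 → p.2 ≠ s.2 →
      ∀ t, ∃ T ∈ localClass w true s (some t), p ∈ T := by
  decide +kernel

lemma exists_system_mem_localClass : ∀ {f : Bool}, ∀ {s}, s ∈ localSystems true f →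
    ∀ t, ∃ T ∈ localClass true f s (some t), s ∈ T := by
  decide +kernel

end LocalChecks

/-! ### The triples on the whole system -/

/-- A Steiner quadruple system on `V` with blocks indexed by `𝓑`, two distinguished points `∞` and
`ω`, and a resolution of each derived design into classes indexed by `R`. The points of each block
are numbered so that `∞` gets the number `3` and `ω` the number `2`; `res x β r` says that the
class `r` of the derived design at `x` contains the triple `β \ {x}`. -/
structure FramedQuadrupleSystem (V 𝓑 R : Type*) where
  infPt : V
  omPt : V
  infPt_ne_omPt : infPt ≠ omPt
  pt : 𝓑 → Fin 4 ↪ V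
  exists_block : ∀ a b c, ∃ β, a ∈ Set.range (pt β) ∧ b ∈ Set.range (pt β) ∧ c ∈ Set.range (pt β)
  block_unique : ∀ {A : Finset V} {β γ}, 3 ≤ #A → (∀ a ∈ A, a ∈ Set.range (pt β)) →
    (∀ a ∈ A, a ∈ Set.range (pt γ)) → β = γ
  pt_three : ∀ {β}, infPt ∈ Set.range (pt β) → pt β 3 = infPt
  pt_two : ∀ {β}, omPt ∈ Set.range (pt β) → pt β 2 = omPt
  res : V → 𝓑 → R → Prop
  existsUnique_res : ∀ {x β}, x ∈ Set.range (pt β) → ∃! r, res x β r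
  exists_block_res : ∀ {x a}, x ≠ a → ∀ r, ∃ β,
    x ∈ Set.range (pt β) ∧ a ∈ Set.range (pt β) ∧ res x β r

namespace FramedQuadrupleSystem

variable {V 𝓑 R : Type*} {Q : FramedQuadrupleSystem V 𝓑 R} {β γ : 𝓑} {c : Cell}
  {s s' p q : V × Fin 3} {l l' : Option (R × Fin 3)} {T : Finset (V × Fin 3)}

variable (Q) in
/-- The inclusion of the expansion of the block `β` into the expansion of `V`. -/
def lift (β : 𝓑) : Cell ↪ V × Fin 3 := (Q.pt β).prodMap (Function.Embedding.refl _)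

lemma exists_lift_eq (h : p.1 ∈ Set.range (Q.pt β)) : ∃ c, Q.lift β c = p :=
  let ⟨n, hn⟩ := h
  ⟨(n, p.2), Prod.ext hn rfl⟩

lemma lift_fst_mem_range (c : Cell) : (Q.lift β c).1 ∈ Set.range (Q.pt β) := ⟨c.1, rfl⟩

lemma fst_ne_of_lift_fst_ne {d : Cell} (h : (Q.lift β c).1 ≠ (Q.lift β d).1) : c.1 ≠ d.1 :=
  ne_of_apply_ne (Q.pt β) h

variable [DecidableEq V]

variable (Q) in
/-- Whether the block `β` contains `∞`. -/
def hasInf (β : 𝓑) : Bool := Q.pt β 3 = Q.infPt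

variable (Q) in
/-- Whether the block `β` contains `ω`. -/
def hasOm (β : 𝓑) : Bool := Q.pt β 2 = Q.omPt

lemma hasInf_eq_true_iff : Q.hasInf β = true ↔ Q.infPt ∈ Set.range (Q.pt β) :=
  decide_eq_true_iff.trans ⟨fun h => ⟨3, h⟩, Q.pt_three⟩

lemma hasOm_eq_true_iff : Q.hasOm β = true ↔ Q.omPt ∈ Set.range (Q.pt β) :=
  decide_eq_true_iff.trans ⟨fun h => ⟨2, h⟩, Q.pt_two⟩

lemma pt_eq_infPt_iff {n : Fin 4} : Q.pt β n = Q.infPt ↔ Q.hasInf β = true ∧ n = 3 := by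
  refine ⟨fun h => ?_, fun ⟨h, hn⟩ => hn ▸ Q.pt_three (hasInf_eq_true_iff.1 h)⟩
  have hmem : Q.infPt ∈ Set.range (Q.pt β) := ⟨n, h⟩
  exact ⟨hasInf_eq_true_iff.2 hmem, (Q.pt β).injective (h.trans (Q.pt_three hmem).symm)⟩

lemma pt_eq_omPt_iff {n : Fin 4} : Q.pt β n = Q.omPt ↔ Q.hasOm β = true ∧ n = 2 := by
  refine ⟨fun h => ?_, fun ⟨h, hn⟩ => hn ▸ Q.pt_two (hasOm_eq_true_iff.1 h)⟩
  have hmem : Q.omPt ∈ Set.range (Q.pt β) := ⟨n, h⟩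
  exact ⟨hasOm_eq_true_iff.2 hmem, (Q.pt β).injective (h.trans (Q.pt_two hmem).symm)⟩

lemma lift_fst_eq_infPt_iff : (Q.lift β c).1 = Q.infPt ↔ Q.hasInf β = true ∧ c.1 = 3 :=
  pt_eq_infPt_iff

lemma lift_fst_eq_omPt_iff : (Q.lift β c).1 = Q.omPt ↔ Q.hasOm β = true ∧ c.1 = 2 :=
  pt_eq_omPt_iff

variable (Q) in
/-- The class `l` of the system `s`, made of local triples of the blocks through `s.1`. In the class
`some (r, t)` only the blocks of the class `r` of the derived design at `s.1` take part. -/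
def kirkmanClass (s : V × Fin 3) (l : Option (R × Fin 3)) : Set (Finset (V × Fin 3)) :=
  {T | ∃ β c T₀, Q.lift β c = s ∧ (∀ r ∈ l.map Prod.fst, Q.res s.1 β r) ∧
    T₀ ∈ localClass (Q.hasOm β) (Q.hasInf β) c (l.map Prod.snd) ∧ T₀.map (Q.lift β) = T}

variable (Q) in
/-- Some triple of the system `s` contains both `p` and `q`. -/
def Covers (s p q : V × Fin 3) : Prop :=
  ∃ l, ∃ T ∈ Q.kirkmanClass s l, p ∈ T ∧ q ∈ T

lemma Covers.symm (h : Q.Covers s p q) : Q.Covers s q p :=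
  let ⟨l, T, hT, hp, hq⟩ := h
  ⟨l, T, hT, hq, hp⟩

section Disjointness

variable {T₀ T₀' : Finset Cell} {t t' : Option (Fin 3)}

lemma image_fst_map_lift (T₀ : Finset Cell) :
    (T₀.map (Q.lift β)).image Prod.fst = (T₀.image Prod.fst).map (Q.pt β) := by
  simp only [map_eq_image, image_image]
  rfl

lemma mem_range_of_mem_image_fst {a : V} (ha : a ∈ (T₀.map (Q.lift β)).image Prod.fst) :
    a ∈ Set.range (Q.pt β) := by
  rw [image_fst_map_lift] at ha
  obtain ⟨n, -, rfl⟩ := mem_map.1 ha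
  exact Set.mem_range_self n

lemma spread_of_mem_localClass (hc : c ∈ localSystems (Q.hasOm β) (Q.hasInf β))
    (hT₀ : T₀ ∈ localClass (Q.hasOm β) (Q.hasInf β) c t) {A : Finset V}
    (hA : A = (T₀.map (Q.lift β)).image Prod.fst) :
    3 ≤ #A ∨ Q.infPt ∈ Set.range (Q.pt β) ∧ (3 ≤ #(insert Q.infPt A) ∨
      Q.omPt ∈ Set.range (Q.pt β) ∧ (3 ≤ #(insert Q.omPt (insert Q.infPt A)) ∨
        T₀ = {(2, 1), (2, 2), (3, 0)})) := by
  rw [image_fst_map_lift] at hA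
  rcases localClass_spread hc hT₀ with h | ⟨hinf, h⟩
  · exact .inl (by rwa [hA, card_map])
  rw [hasInf_eq_true_iff] at hinf
  refine .inr ⟨hinf, ?_⟩
  rw [hA, ← Q.pt_three hinf, ← map_insert]
  rcases h with h | ⟨hom, h⟩
  · exact .inl (by rwa [card_map])
  rw [hasOm_eq_true_iff] at hom
  refine .inr ⟨hom, h.imp_left fun h => ?_⟩
  rwa [← Q.pt_two hom, ← map_insert, card_map]

lemma eq_of_exceptional_mem_localClass (hc : c ∈ localSystems (Q.hasOm β) (Q.hasInf β))
    (hinf : Q.infPt ∈ Set.range (Q.pt β)) (hom : Q.omPt ∈ Set.range (Q.pt β))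
    (h : {(2, 1), (2, 2), (3, 0)} ∈ localClass (Q.hasOm β) (Q.hasInf β) c t) :
    Q.lift β c = (Q.infPt, 0) ∧ t = none := by
  rw [hasInf_eq_true_iff.2 hinf, hasOm_eq_true_iff.2 hom] at hc h
  obtain ⟨rfl, rfl⟩ := eq_of_mem_localClass (s' := (3, 0)) (t' := none) hc (by decide) h (by decide)
  exact ⟨Prod.ext (Q.pt_three hinf) rfl, rfl⟩

lemma block_eq_or_exceptional {c' : Cell} (hc : c ∈ localSystems (Q.hasOm β) (Q.hasInf β))
    (hT₀ : T₀ ∈ localClass (Q.hasOm β) (Q.hasInf β) c t)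
    (hc' : c' ∈ localSystems (Q.hasOm γ) (Q.hasInf γ))
    (hT₀' : T₀' ∈ localClass (Q.hasOm γ) (Q.hasInf γ) c' t')
    (hT : T₀.map (Q.lift β) = T₀'.map (Q.lift γ)) :
    β = γ ∨ (Q.lift β c = (Q.infPt, 0) ∧ t = none) ∧ Q.lift γ c' = (Q.infPt, 0) ∧ t' = none := by
  set A := (T₀.map (Q.lift β)).image Prod.fst with hA
  have hA' : A = (T₀'.map (Q.lift γ)).image Prod.fst := by rw [hA, hT]
  have hβ : ∀ a ∈ A, a ∈ Set.range (Q.pt β) := fun a ha => mem_range_of_mem_image_fst (hA ▸ ha)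
  have hγ : ∀ a ∈ A, a ∈ Set.range (Q.pt γ) := fun a ha => mem_range_of_mem_image_fst (hA' ▸ ha)
  by_cases h : 3 ≤ #A
  · exact .inl (Q.block_unique h hβ hγ)
  obtain ⟨hinf, hspread⟩ := (spread_of_mem_localClass hc hT₀ hA).resolve_left h
  obtain ⟨hinf', hspread'⟩ := (spread_of_mem_localClass hc' hT₀' hA').resolve_left h
  replace hβ := (forall_mem_insert _ _ (· ∈ Set.range (Q.pt β))).2 ⟨hinf, hβ⟩
  replace hγ := (forall_mem_insert _ _ (· ∈ Set.range (Q.pt γ))).2 ⟨hinf', hγ⟩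
  by_cases h : 3 ≤ #(insert Q.infPt A)
  · exact .inl (Q.block_unique h hβ hγ)
  obtain ⟨hom, hspread⟩ := hspread.resolve_left h
  obtain ⟨hom', hspread'⟩ := hspread'.resolve_left h
  replace hβ := (forall_mem_insert _ _ (· ∈ Set.range (Q.pt β))).2 ⟨hom, hβ⟩
  replace hγ := (forall_mem_insert _ _ (· ∈ Set.range (Q.pt γ))).2 ⟨hom', hγ⟩
  by_cases h : 3 ≤ #(insert Q.omPt (insert Q.infPt A))
  · exact .inl (Q.block_unique h hβ hγ)
  obtain rfl := hspread.resolve_left h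
  obtain rfl := hspread'.resolve_left h
  exact .inr ⟨eq_of_exceptional_mem_localClass hc hinf hom hT₀,
    eq_of_exceptional_mem_localClass hc' hinf' hom' hT₀'⟩

end Disjointness

variable [Fintype V]

variable (Q) in
/-- The point set of the large set: three copies of each point, except that `∞` has only its copy
`0` and `ω` lacks its copy `0`. -/
def points : Finset (V × Fin 3) :=
  {p | (p.1 = Q.infPt → p.2 = 0) ∧ (p.1 = Q.omPt → p.2 ≠ 0)}

variable (Q) in
/-- The index set of the Kirkman triple systems: one for each point that does not lie over `ω`, and
none for the copies of `∞` that are not points. -/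
def systems : Finset (V × Fin 3) :=
  {s | (s.1 = Q.infPt → s.2 = 0) ∧ s.1 ≠ Q.omPt}

lemma systems_subset_points : Q.systems ⊆ Q.points :=
  monotone_filter_right _ fun _ _ hs => ⟨hs.1, fun h => absurd h hs.2⟩

variable (Q) in
lemma card_points_add_three : #Q.points + 3 = 3 * Fintype.card V := by
  have hcompl : Q.pointsᶜ = {(Q.infPt, 1), (Q.infPt, 2), (Q.omPt, 0)} := by
    ext ⟨a, j⟩
    fin_cases j <;> simp [points]
  have hcard : #Q.pointsᶜ = 3 := by
    rw [hcompl]; simp [Q.infPt_ne_omPt]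
  have := card_add_card_compl Q.points
  rw [hcard] at this
  simpa [mul_comm] using this

variable (Q) in
lemma card_systems_add_five : #Q.systems + 5 = 3 * Fintype.card V := by
  have hcompl : Q.systemsᶜ =
      {(Q.infPt, 1), (Q.infPt, 2), (Q.omPt, 0), (Q.omPt, 1), (Q.omPt, 2)} := by
    ext ⟨a, j⟩
    fin_cases j <;> simp [systems, imp_iff_not_or]
  have hcard : #Q.systemsᶜ = 5 := by
    rw [hcompl]; simp [Q.infPt_ne_omPt]
  have := card_add_card_compl Q.systems
  rw [hcard] at this
  simpa [mul_comm] using this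

lemma lift_mem_points_iff :
    Q.lift β c ∈ Q.points ↔ c ∈ localPoints (Q.hasOm β) (Q.hasInf β) := by
  have hsnd : (Q.lift β c).2 = c.2 := rfl
  simp [points, localPoints, hsnd, lift_fst_eq_infPt_iff, lift_fst_eq_omPt_iff]

lemma lift_mem_systems_iff :
    Q.lift β c ∈ Q.systems ↔ c ∈ localSystems (Q.hasOm β) (Q.hasInf β) := by
  have hsnd : (Q.lift β c).2 = c.2 := rfl
  simp [systems, localSystems, hsnd, lift_fst_eq_infPt_iff, lift_fst_eq_omPt_iff]

lemma subset_of_mem_kirkmanClass (hs : s ∈ Q.systems) (hT : T ∈ Q.kirkmanClass s l) :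
    T ⊆ Q.points := by
  obtain ⟨β, c, T₀, rfl, -, hT₀, rfl⟩ := hT
  intro p hp
  obtain ⟨d, hd, rfl⟩ := mem_map.1 hp
  exact lift_mem_points_iff.2
    (subset_localPoints_of_mem_localClass (lift_mem_systems_iff.1 hs) hT₀ hd)

lemma card_of_mem_kirkmanClass (hs : s ∈ Q.systems) (hT : T ∈ Q.kirkmanClass s l) : #T = 3 := by
  obtain ⟨β, c, T₀, rfl, -, hT₀, rfl⟩ := hT
  rw [card_map, card_of_mem_localClass (lift_mem_systems_iff.1 hs) hT₀]

lemma eq_of_mem_kirkmanClass (hs : s ∈ Q.systems) (hs' : s' ∈ Q.systems)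
    (hT : T ∈ Q.kirkmanClass s l) (hT' : T ∈ Q.kirkmanClass s' l') : s = s' ∧ l = l' := by
  obtain ⟨β, c, T₀, rfl, hres, hT₀, rfl⟩ := hT
  obtain ⟨γ, c', T₀', rfl, hres', hT₀', hmap⟩ := hT'
  rw [lift_mem_systems_iff] at hs hs'
  rcases block_eq_or_exceptional hs hT₀ hs' hT₀' hmap.symm with rfl | ⟨⟨hs, hl⟩, hs', hl'⟩
  · obtain rfl := map_injective _ hmap
    obtain ⟨rfl, hsnd⟩ := eq_of_mem_localClass hs hs' hT₀ hT₀'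
    refine ⟨rfl, ?_⟩
    match l, l' with
    | none, none => rfl
    | some (r, t), some (r', t') =>
      have hr : r = r' := (Q.existsUnique_res (lift_fst_mem_range c)).unique
        (hres r rfl) (hres' r' rfl)
      have ht : t = t' := Option.some.inj hsnd
      rw [hr, ht]
  · rw [Option.map_eq_none_iff] at hl hl'
    exact ⟨hs.trans hs'.symm, hl.trans hl'.symm⟩

section PointCovering

lemma exists_mem_kirkmanClass_of_block (hs : s ∈ Q.systems) (hp : p ∈ Q.points)
    (hsβ : s.1 ∈ Set.range (Q.pt β)) (hpβ : p.1 ∈ Set.range (Q.pt β))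
    (hres : ∀ r ∈ l.map Prod.fst, Q.res s.1 β r)
    (hlocal : ∀ c ∈ localSystems (Q.hasOm β) (Q.hasInf β), Q.lift β c = s →
      ∀ d ∈ localPoints (Q.hasOm β) (Q.hasInf β), Q.lift β d = p →
        ∃ T₀ ∈ localClass (Q.hasOm β) (Q.hasInf β) c (l.map Prod.snd), d ∈ T₀) :
    ∃ T ∈ Q.kirkmanClass s l, p ∈ T := by
  obtain ⟨c, rfl⟩ := exists_lift_eq hsβ
  obtain ⟨d, rfl⟩ := exists_lift_eq hpβ
  obtain ⟨T₀, hT₀, hd⟩ := hlocal c (lift_mem_systems_iff.1 hs) rfl d (lift_mem_points_iff.1 hp) rfl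
  exact ⟨T₀.map (Q.lift β), ⟨β, c, T₀, rfl, hres, hT₀, rfl⟩, mem_map_of_mem _ hd⟩

lemma exists_mem_kirkmanClass_none_of_special (hs : s ∈ Q.systems) (hp : p ∈ Q.points)
    (h : p.1 = s.1 ∨ p.1 = Q.infPt ∨ s.1 = Q.infPt) : ∃ T ∈ Q.kirkmanClass s none, p ∈ T := by
  obtain ⟨β, hsβ, hpβ, hinf, hom⟩ : ∃ β, s.1 ∈ Set.range (Q.pt β) ∧ p.1 ∈ Set.range (Q.pt β) ∧
      Q.infPt ∈ Set.range (Q.pt β) ∧ Q.omPt ∈ Set.range (Q.pt β) := by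
    rcases h with h | h | h <;> rw [h]
    · obtain ⟨β, hs, hinf, hom⟩ := Q.exists_block s.1 Q.infPt Q.omPt
      exact ⟨β, hs, hs, hinf, hom⟩
    · obtain ⟨β, hs, hinf, hom⟩ := Q.exists_block s.1 Q.infPt Q.omPt
      exact ⟨β, hs, hinf, hinf, hom⟩
    · obtain ⟨β, hp, hinf, hom⟩ := Q.exists_block p.1 Q.infPt Q.omPt
      exact ⟨β, hinf, hp, hinf, hom⟩
  refine exists_mem_kirkmanClass_of_block hs hp hsβ hpβ (by simp) fun c hc _ d hd _ => ?_
  rw [hasInf_eq_true_iff.2 hinf, hasOm_eq_true_iff.2 hom] at hc hd ⊢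
  exact exists_mem_localClass_true_true hc hd none

lemma exists_mem_kirkmanClass_none (hs : s ∈ Q.systems) (hp : p ∈ Q.points) :
    ∃ T ∈ Q.kirkmanClass s none, p ∈ T := by
  by_cases hspecial : p.1 = s.1 ∨ p.1 = Q.infPt ∨ s.1 = Q.infPt
  · exact exists_mem_kirkmanClass_none_of_special hs hp hspecial
  obtain ⟨hps, hpinf, hsinf⟩ := by simpa only [not_or] using hspecial
  obtain ⟨β, hsβ, hpβ, hinfβ⟩ := Q.exists_block s.1 p.1 Q.infPt
  refine exists_mem_kirkmanClass_of_block hs hp hsβ hpβ (by simp) ?_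
  rintro c hc rfl d hd rfl
  have hinf := hasInf_eq_true_iff.2 hinfβ
  have hc3 : c.1 ≠ 3 := fun h => hsinf (lift_fst_eq_infPt_iff.2 ⟨hinf, h⟩)
  have hd3 : d.1 ≠ 3 := fun h => hpinf (lift_fst_eq_infPt_iff.2 ⟨hinf, h⟩)
  rw [hinf] at hc hd ⊢
  exact exists_mem_localClass_none hc hc3 hd (fst_ne_of_lift_fst_ne hps) hd3

lemma exists_mem_kirkmanClass_some_of_fst_eq (hs : s ∈ Q.systems) (hp : p ∈ Q.points)
    (hps : p.1 = s.1) (r : R) (t : Fin 3) : ∃ T ∈ Q.kirkmanClass s (some (r, t)), p ∈ T := by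
  by_cases hsnd : p.2 = s.2
  · obtain rfl : p = s := Prod.ext hps hsnd
    have hom_ne : p.1 ≠ Q.omPt := (mem_filter.1 hs).2.2
    obtain ⟨β, hpβ, homβ, hres⟩ := Q.exists_block_res hom_ne r
    refine exists_mem_kirkmanClass_of_block hs hp hpβ hpβ (by simpa using hres) ?_
    rintro c hc rfl d - hd
    obtain rfl := (Q.lift β).injective hd
    rw [hasOm_eq_true_iff.2 homβ] at hc ⊢
    exact exists_system_mem_localClass hc t
  · have hinf_ne : s.1 ≠ Q.infPt := fun h => hsnd <| by
      rw [(mem_filter.1 hs).2.1 h, (mem_filter.1 hp).2.1 (hps.trans h)]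
    obtain ⟨β, hsβ, hinfβ, hres⟩ := Q.exists_block_res hinf_ne r
    refine exists_mem_kirkmanClass_of_block hs hp hsβ (hps ▸ hsβ) (by simpa using hres) ?_
    rintro c hc rfl d hd rfl
    rw [hasInf_eq_true_iff.2 hinfβ] at hc hd ⊢
    exact exists_mem_localClass_some_of_fst_eq hc hd ((Q.pt β).injective hps) hsnd t

lemma exists_mem_kirkmanClass (hs : s ∈ Q.systems) (hp : p ∈ Q.points) (l : Option (R × Fin 3)) :
    ∃ T ∈ Q.kirkmanClass s l, p ∈ T := by
  rcases l with _ | ⟨r, t⟩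
  · exact exists_mem_kirkmanClass_none hs hp
  by_cases hps : p.1 = s.1
  · exact exists_mem_kirkmanClass_some_of_fst_eq hs hp hps r t
  obtain ⟨β, hsβ, hpβ, hres⟩ := Q.exists_block_res (Ne.symm hps) r
  refine exists_mem_kirkmanClass_of_block hs hp hsβ hpβ (by simpa using hres) ?_
  rintro c hc rfl d hd rfl
  exact exists_mem_localClass_some hc hd (fst_ne_of_lift_fst_ne hps) t

end PointCovering

section PairCovering

lemma covers_of_block (hs : s ∈ Q.systems) (hp : p ∈ Q.points) (hq : q ∈ Q.points)
    (hsβ : s.1 ∈ Set.range (Q.pt β)) (hpβ : p.1 ∈ Set.range (Q.pt β))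
    (hqβ : q.1 ∈ Set.range (Q.pt β))
    (hlocal : ∀ c ∈ localSystems (Q.hasOm β) (Q.hasInf β), Q.lift β c = s →
      ∀ d ∈ localPoints (Q.hasOm β) (Q.hasInf β), Q.lift β d = p →
        ∀ e ∈ localPoints (Q.hasOm β) (Q.hasInf β), Q.lift β e = q →
          LocallyCovers (Q.hasOm β) (Q.hasInf β) c d e) : Q.Covers s p q := by
  obtain ⟨c, rfl⟩ := exists_lift_eq hsβ
  obtain ⟨d, rfl⟩ := exists_lift_eq hpβ
  obtain ⟨e, rfl⟩ := exists_lift_eq hqβ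
  rw [lift_mem_systems_iff] at hs
  rw [lift_mem_points_iff] at hp hq
  obtain ⟨t, T₀, hT₀, hd, he⟩ := hlocal c hs rfl d hp rfl e hq rfl
  obtain ⟨r, hr, -⟩ := Q.existsUnique_res hsβ
  refine ⟨t.map (r, ·), T₀.map (Q.lift β), ⟨β, c, T₀, rfl, ?_, ?_, rfl⟩,
    mem_map_of_mem _ hd, mem_map_of_mem _ he⟩
  · cases t <;> simp [hr]
  · simpa [Function.comp_def] using hT₀

lemma covers_of_special_block (hs : s ∈ Q.systems) (hp : p ∈ Q.points) (hq : q ∈ Q.points)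
    (hpq : p ≠ q) (hinfβ : Q.infPt ∈ Set.range (Q.pt β)) (homβ : Q.omPt ∈ Set.range (Q.pt β))
    (hsβ : s.1 ∈ Set.range (Q.pt β)) (hpβ : p.1 ∈ Set.range (Q.pt β))
    (hqβ : q.1 ∈ Set.range (Q.pt β)) : Q.Covers s p q := by
  refine covers_of_block hs hp hq hsβ hpβ hqβ ?_
  rintro c hc rfl d hd rfl e he rfl
  rw [hasInf_eq_true_iff.2 hinfβ, hasOm_eq_true_iff.2 homβ] at hc hd he ⊢
  exact locallyCovers_true_true hc hd he (ne_of_apply_ne _ hpq)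

lemma covers_of_fst_eq (hs : s ∈ Q.systems) (hp : p ∈ Q.points) (hq : q ∈ Q.points)
    (hpq : p ≠ q) (hfst : p.1 = q.1) : Q.Covers s p q := by
  by_cases hps : p.1 = s.1
  · obtain ⟨β, hsβ, hinfβ, homβ⟩ := Q.exists_block s.1 Q.infPt Q.omPt
    have hpβ := hps ▸ hsβ
    exact covers_of_special_block hs hp hq hpq hinfβ homβ hsβ hpβ (hfst ▸ hpβ)
  by_cases hsinf : s.1 = Q.infPt
  · obtain ⟨β, hpβ, hinfβ, homβ⟩ := Q.exists_block p.1 Q.infPt Q.omPt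
    exact covers_of_special_block hs hp hq hpq hinfβ homβ (hsinf ▸ hinfβ) hpβ (hfst ▸ hpβ)
  obtain ⟨β, hsβ, hpβ, hinfβ⟩ := Q.exists_block s.1 p.1 Q.infPt
  refine covers_of_block hs hp hq hsβ hpβ (hfst ▸ hpβ) ?_
  rintro c hc rfl d hd rfl e he rfl
  have hinf := hasInf_eq_true_iff.2 hinfβ
  have hc3 : c.1 ≠ 3 := fun h => hsinf (lift_fst_eq_infPt_iff.2 ⟨hinf, h⟩)
  rw [hinf] at hc hd he ⊢
  exact locallyCovers_of_fst_eq hc hc3 hd he (fst_ne_of_lift_fst_ne hps) (ne_of_apply_ne _ hpq)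
    ((Q.pt β).injective hfst)

lemma covers_system (hs : s ∈ Q.systems) (hp : p ∈ Q.points) (hps : p.1 ≠ s.1) :
    Q.Covers s p s := by
  have hq : s ∈ Q.points := systems_subset_points hs
  by_cases hpom : p.1 = Q.omPt
  · obtain ⟨β, hsβ, hinfβ, homβ⟩ := Q.exists_block s.1 Q.infPt Q.omPt
    exact covers_of_special_block hs hp hq (ne_of_apply_ne _ hps) hinfβ homβ hsβ (hpom ▸ homβ) hsβ
  obtain ⟨β, hsβ, hpβ, homβ⟩ := Q.exists_block s.1 p.1 Q.omPt
  refine covers_of_block hs hp hq hsβ hpβ hsβ ?_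
  rintro c hc rfl d hd rfl e - hec
  obtain rfl := (Q.lift β).injective hec
  have hom := hasOm_eq_true_iff.2 homβ
  have hd2 : d.1 ≠ 2 := fun h => hpom (lift_fst_eq_omPt_iff.2 ⟨hom, h⟩)
  rw [hom] at hc hd ⊢
  exact locallyCovers_system hc hd (fst_ne_of_lift_fst_ne hps) hd2

lemma covers_of_fst_eq_system_fst (hs : s ∈ Q.systems) (hp : p ∈ Q.points) (hq : q ∈ Q.points)
    (hqs : q.1 = s.1) (hps : p.1 ≠ s.1) : Q.Covers s p q := by
  by_cases hsnd : q.2 = s.2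
  · obtain rfl : q = s := Prod.ext hqs hsnd
    exact covers_system hs hp hps
  by_cases hpinf : p.1 = Q.infPt
  · obtain ⟨β, hsβ, hinfβ, homβ⟩ := Q.exists_block s.1 Q.infPt Q.omPt
    exact covers_of_special_block hs hp hq (ne_of_apply_ne Prod.fst (hqs ▸ hps)) hinfβ homβ hsβ
      (hpinf ▸ hinfβ) (hqs ▸ hsβ)
  obtain ⟨β, hsβ, hpβ, hinfβ⟩ := Q.exists_block s.1 p.1 Q.infPt
  refine covers_of_block hs hp hq hsβ hpβ (hqs ▸ hsβ) ?_
  rintro c hc rfl d hd rfl e he rfl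
  have hinf := hasInf_eq_true_iff.2 hinfβ
  have hd3 : d.1 ≠ 3 := fun h => hpinf (lift_fst_eq_infPt_iff.2 ⟨hinf, h⟩)
  rw [hinf] at hc hd he ⊢
  exact locallyCovers_of_system_fst_eq hc hd he (fst_ne_of_lift_fst_ne hps) hd3
    ((Q.pt β).injective hqs) hsnd

lemma covers_of_ne (hs : s ∈ Q.systems) (hp : p ∈ Q.points) (hq : q ∈ Q.points) (hpq : p ≠ q) :
    Q.Covers s p q := by
  by_cases hfst : p.1 = q.1
  · exact covers_of_fst_eq hs hp hq hpq hfst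
  by_cases hqs : q.1 = s.1
  · exact covers_of_fst_eq_system_fst hs hp hq hqs (hqs ▸ hfst)
  by_cases hps : p.1 = s.1
  · exact (covers_of_fst_eq_system_fst hs hq hp hps hqs).symm
  obtain ⟨β, hsβ, hpβ, hqβ⟩ := Q.exists_block s.1 p.1 q.1
  refine covers_of_block hs hp hq hsβ hpβ hqβ ?_
  rintro c hc rfl d hd rfl e he rfl
  exact locallyCovers_of_distinct hc hd he (fst_ne_of_lift_fst_ne hps) (fst_ne_of_lift_fst_ne hqs)
    (fst_ne_of_lift_fst_ne hfst)

end PairCovering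

variable (Q) in
lemma isKirkmanCover : IsKirkmanCover Q.points fun s : Q.systems => Q.kirkmanClass s where
  subset {s _ _} hT := subset_of_mem_kirkmanClass s.2 hT
  card_eq_three {s _ _} hT := card_of_mem_kirkmanClass s.2 hT
  eq_of_mem {s s' _ _ _} hT hT' :=
    (eq_of_mem_kirkmanClass s.2 s'.2 hT hT').imp_left Subtype.ext
  exists_mem_pair s _ hp _ hq hpq := covers_of_ne s.2 hp hq hpq
  exists_mem_point s l _ hp := exists_mem_kirkmanClass s.2 hp l

end FramedQuadrupleSystem

theorem FramedQuadrupleSystem.existsLKTS {V 𝓑 R : Type*} [Fintype V] [Fintype R]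
    (Q : FramedQuadrupleSystem V 𝓑 R) (hcard : Fintype.card V = 2 * Fintype.card R + 2) :
    ExistsLKTS (3 * (2 * Fintype.card R + 1)) := by
  classical
  have hpoints := Q.card_points_add_three
  have hsystems := Q.card_systems_add_five
  rw [show 3 * (2 * Fintype.card R + 1) = #Q.points by lia]
  refine Q.isKirkmanCover.existsLKTS_card ?_ ?_
  · rw [Fintype.card_coe]
    lia
  · rw [Fintype.card_option, Fintype.card_prod, Fintype.card_fin]
    lia

/-! ### Quadruple systems with resolvable derived designs -/

section ResolvableDerivedDesigns

variable {t k v : ℕ} {X Y : Finset ℕ} {B : Finset (Finset ℕ)} {x : ℕ}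

lemma mem_derivedBlocks_iff {T : Finset ℕ} :
    T ∈ derivedBlocks B x ↔ x ∉ T ∧ insert x T ∈ B := by
  simp only [derivedBlocks, mem_image, mem_filter]
  constructor
  · rintro ⟨b, ⟨hb, hxb⟩, rfl⟩
    exact ⟨notMem_erase x b, (insert_erase hxb).symm ▸ hb⟩
  · rintro ⟨hxT, hT⟩
    exact ⟨insert x T, ⟨hT, mem_insert_self x T⟩, erase_insert hxT⟩

lemma IsSteiner.derived (h : IsSteiner (t + 1) (k + 1) (v + 1) X B) (hx : x ∈ X) :
    IsSteiner t k v (X.erase x) (derivedBlocks B x) := by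
  obtain ⟨hcard, hB, hex⟩ := h
  refine ⟨by rw [card_erase_of_mem hx, hcard, Nat.add_sub_cancel], fun b hb => ?_,
    fun T hT hTcard => ?_⟩
  · obtain ⟨hxb, hb⟩ := mem_derivedBlocks_iff.1 hb
    obtain ⟨hsub, hbcard⟩ := hB _ hb
    rw [card_insert_of_notMem hxb, Nat.add_right_cancel_iff] at hbcard
    exact ⟨subset_erase.2 ⟨(subset_insert x b).trans hsub, hxb⟩, hbcard⟩
  · obtain ⟨hTX, hxT⟩ := subset_erase.1 hT
    obtain ⟨b, ⟨hb, hTb⟩, huniq⟩ := hex (insert x T) (insert_subset hx hTX)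
      (by rw [card_insert_of_notMem hxT, hTcard])
    obtain ⟨hxb, hTb⟩ := insert_subset_iff.1 hTb
    refine ⟨b.erase x, ⟨mem_derivedBlocks_iff.2 ⟨notMem_erase x b, ?_⟩,
      subset_erase.2 ⟨hTb, hxT⟩⟩, fun c ⟨hc, hTc⟩ => ?_⟩
    · rwa [insert_erase hxb]
    · obtain ⟨hxc, hc⟩ := mem_derivedBlocks_iff.1 hc
      rw [← huniq _ ⟨hc, insert_subset_insert x hTc⟩, erase_insert hxc]

lemma IsSteiner.exists_superset (h : IsSteiner t k v X B) (htv : t ≤ v) {A : Finset ℕ} (hA : A ⊆ X)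
    (hAt : #A ≤ t) : ∃ b ∈ B, A ⊆ b := by
  obtain ⟨T, hAT, hTX, hT⟩ := exists_subsuperset_card_eq hA hAt (htv.trans_eq h.1.symm)
  obtain ⟨b, ⟨hb, hTb⟩, -⟩ := h.2.2 T hTX hT
  exact ⟨b, hb, hAT.trans hTb⟩

lemma IsSteiner.eq_of_subset (h : IsSteiner t k v X B) {A b c : Finset ℕ} (hA : t ≤ #A) (hb : b ∈ B)
    (hc : c ∈ B) (hAb : A ⊆ b) (hAc : A ⊆ c) : b = c := by
  obtain ⟨T, hTA, hT⟩ := exists_subset_card_eq hA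
  exact (h.2.2 T (hTA.trans (hAb.trans (h.2.1 b hb).1)) hT).unique ⟨hb, hTA.trans hAb⟩
    ⟨hc, hTA.trans hAc⟩

/-- Each parallel class has one block through a given point `y`, and these blocks without `y`
partition the other points. -/
lemma IsSteiner.eq_mul_add_one_of_resolution {r : ℕ} {P : Fin r → Finset (Finset ℕ)}
    (h : IsSteiner 2 (k + 1) v Y B) (hY : Y.Nonempty) (hP : ∀ i, IsParallelClass Y (P i))
    (hPB : ∀ i, P i ⊆ B) (hBP : ∀ b ∈ B, ∃! i, b ∈ P i) : v = r * k + 1 := by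
  obtain ⟨y, hy⟩ := hY
  choose b hb hb_unique using fun i => (hP i).2 y hy
  have hbB : ∀ i, b i ∈ B := fun i => hPB i (hb i).1
  have hdisj : ∀ i j, i ≠ j → Disjoint ((b i).erase y) ((b j).erase y) := by
    refine fun i j hij => disjoint_left.2 fun q hqi hqj => hij ?_
    obtain ⟨⟨hqy, hqi⟩, -, hqj⟩ := And.intro (mem_erase.1 hqi) (mem_erase.1 hqj)
    have heq := h.eq_of_subset (card_pair hqy).ge (hbB i) (hbB j)
      (by simp [insert_subset_iff, hqi, (hb i).2]) (by simp [insert_subset_iff, hqj, (hb j).2])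
    exact (hBP _ (hbB i)).unique (hb i).1 (heq ▸ (hb j).1)
  have hfill : (univ.biUnion fun i => (b i).erase y) = Y.erase y := by
    refine (biUnion_subset.2 fun i _ => erase_subset_erase y (h.2.1 _ (hbB i)).1).antisymm ?_
    intro q hq
    obtain ⟨hqy, hqY⟩ := mem_erase.1 hq
    obtain ⟨c, ⟨hcB, hc⟩, -⟩ := h.2.2 {q, y} (by simp [insert_subset_iff, hqY, hy]) (card_pair hqy)
    obtain ⟨hqc, hyc⟩ : q ∈ c ∧ y ∈ c := by simpa [insert_subset_iff] using hc
    obtain ⟨i, hi, -⟩ := hBP c hcB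
    obtain rfl := hb_unique i c ⟨hi, hyc⟩
    exact mem_biUnion.2 ⟨i, mem_univ i, mem_erase.2 ⟨hqy, hqc⟩⟩
  have hcard : ∀ i, #((b i).erase y) = k := fun i => by
    rw [card_erase_of_mem (hb i).2, (h.2.1 _ (hbB i)).2, Nat.add_sub_cancel]
  rw [← h.1, ← card_erase_add_one hy, ← hfill, card_biUnion fun i _ j _ => hdisj i j]
  simp [hcard]

lemma IsRDS.exists_resolutions (h : IsRDS 3 (k + 2) (v + 1) X B) (hk : 0 < k) (hv : 0 < v) :
    ∃ r, v = r * k + 1 ∧ ∀ x : X, ∃ P : Fin r → Finset (Finset ℕ),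
      (∀ i, IsParallelClass (X.erase x) (P i)) ∧ (∀ i, P i ⊆ derivedBlocks B x) ∧
        ∀ b ∈ derivedBlocks B x, ∃! i, b ∈ P i := by
  have exists_resolution : ∀ x : X, ∃ r, v = r * k + 1 ∧ ∃ P : Fin r → Finset (Finset ℕ),
      (∀ i, IsParallelClass (X.erase x) (P i)) ∧ (∀ i, P i ⊆ derivedBlocks B x) ∧
        ∀ b ∈ derivedBlocks B x, ∃! i, b ∈ P i := by
    rintro ⟨x, hx⟩
    obtain ⟨r, P, hP, hPB, hBP⟩ := h.2 x hx
    have hY : (X.erase x).Nonempty := by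
      rw [← card_pos, card_erase_of_mem hx, h.1.1]
      simpa using hv
    exact ⟨r, (h.1.derived hx).eq_mul_add_one_of_resolution hY hP hPB hBP, P, hP, hPB, hBP⟩
  obtain ⟨x₀, hx₀⟩ : X.Nonempty := card_pos.1 (by rw [h.1.1]; exact v.succ_pos)
  obtain ⟨r, hr, -⟩ := exists_resolution ⟨x₀, hx₀⟩
  refine ⟨r, hr, fun x => ?_⟩
  obtain ⟨r', hr', P, hP⟩ := exists_resolution x
  obtain rfl : r = r' := Nat.eq_of_mul_eq_mul_right hk (by lia)
  exact ⟨P, hP⟩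

lemma exists_numbering {α : Type*} {b : Finset α} (hb : #b = 4) {p q : α}
    (hpq : p ≠ q) : ∃ e : Fin 4 ↪ α, Set.range e = b ∧ (p ∈ b → e 3 = p) ∧ (q ∈ b → e 2 = q) := by
  classical
  let f : Fin 4 → α := fun n => if n = 2 then q else p
  let s : Finset (Fin 4) := {n | n = 3 ∧ p ∈ b ∨ n = 2 ∧ q ∈ b}
  have hfs : s.image f ⊆ b := by
    simp only [image_subset_iff, s, f, mem_filter, mem_univ, true_and]
    rintro n (⟨rfl, hp⟩ | ⟨rfl, hq⟩) <;> simpa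
  have hinj : Set.InjOn f s := by
    simp only [Set.InjOn, s, f, coe_filter, mem_univ, true_and, Set.mem_ofPred_eq]
    rintro m (⟨rfl, -⟩ | ⟨rfl, -⟩) n (⟨rfl, -⟩ | ⟨rfl, -⟩) <;> simp [hpq, hpq.symm]
  obtain ⟨g, hg⟩ := exists_equiv_extend_of_card_eq (by simpa using hb.symm) hfs hinj
  refine ⟨g.toEmbedding.trans (.subtype _), ?_, fun hp => hg 3 (by simp [s, hp]),
    fun hq => hg 2 (by simp [s, hq])⟩
  exact (g.surjective.range_comp Subtype.val).trans Subtype.range_coe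

lemma IsSteiner.exists_block_numbering (h : IsSteiner t 4 v X B) {p q : X} (hpq : p ≠ q) (β : B) :
    ∃ e : Fin 4 ↪ X, (∀ x, x ∈ Set.range e ↔ x.1 ∈ β.1) ∧ (p.1 ∈ β.1 → e 3 = p) ∧
      (q.1 ∈ β.1 → e 2 = q) := by
  obtain ⟨hβX, hβ⟩ := h.2.1 β.1 β.2
  have hcard : #(β.1.subtype (· ∈ X)) = 4 := by
    rw [card_subtype, filter_true_of_mem hβX, hβ]
  obtain ⟨e, hrange, he3, he2⟩ := exists_numbering hcard hpq
  exact ⟨e, fun x => by simp [hrange], by simpa using he3, by simpa using he2⟩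

lemma IsRDS.exists_framedQuadrupleSystem (h : IsRDS 3 4 (v + 1) X B) (hv : 1 < v) :
    ∃ r, v = 2 * r + 1 ∧ Nonempty (FramedQuadrupleSystem X B (Fin r)) := by
  obtain ⟨r, hr, hres⟩ := h.exists_resolutions (k := 2) two_pos (by lia)
  obtain ⟨p, q, hpq⟩ : ∃ p q : X, p ≠ q :=
    Fintype.exists_pair_of_one_lt_card (by rw [Fintype.card_coe, h.1.1]; lia)
  choose P hP hPB hBP using hres
  choose pt mem_pt pt_three pt_two using h.1.exists_block_numbering hpq
  refine ⟨r, by lia, ⟨{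
    infPt := p
    omPt := q
    infPt_ne_omPt := hpq
    pt := pt
    exists_block := fun a b c => ?_
    block_unique := fun {A β γ} hA hβ hγ => ?_
    pt_three := fun {β} hβ => pt_three β ((mem_pt β _).1 hβ)
    pt_two := fun {β} hβ => pt_two β ((mem_pt β _).1 hβ)
    res := fun x β i => β.1.erase x ∈ P x i
    existsUnique_res := fun {x β} hx => ?_
    exists_block_res := fun {x a} hxa i => ?_ }⟩⟩
  · obtain ⟨β, hβ, habc⟩ := h.1.exists_superset (A := {a.1, b.1, c.1}) (by lia)
      (by simp [insert_subset_iff]) card_le_three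
    refine ⟨⟨β, hβ⟩, ?_⟩
    simpa [mem_pt, insert_subset_iff] using habc
  · have hsub : ∀ β : B, (∀ a ∈ A, a ∈ Set.range (pt β)) → A.map (.subtype _) ⊆ β.1 :=
      fun β hβ => by
        simp only [subset_iff, mem_map, forall_exists_index, and_imp]
        rintro _ a ha rfl
        exact (mem_pt β a).1 (hβ a ha)
    exact Subtype.ext (h.1.eq_of_subset (by rwa [card_map]) β.2 γ.2 (hsub β hβ) (hsub γ hγ))
  · rw [mem_pt] at hx
    exact hBP x _ (mem_image_of_mem _ (mem_filter.2 ⟨β.2, hx⟩))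
  · obtain ⟨b, ⟨hb, hab⟩, -⟩ := (hP x i).2 a
      (mem_erase.2 ⟨fun h => hxa (Subtype.ext h.symm), a.2⟩)
    obtain ⟨hxb, hbB⟩ := mem_derivedBlocks_iff.1 (hPB x i hb)
    refine ⟨⟨insert x.1 b, hbB⟩, ?_⟩
    simp [mem_pt, hab, erase_insert hxb, hb]

end ResolvableDerivedDesigns

/-- If there exists an RDSQS(v + 1), then there exists an LKTS(3v). -/
theorem stmt_0 (v : ℕ) (hv : 0 < v) (h : ExistsRDSQS (v + 1)) :
    ExistsLKTS (3 * v) := by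
  obtain ⟨X, B, hRDS⟩ := h
  obtain rfl | hv := (Nat.succ_le_of_lt hv).eq_or_lt
  · exact existsLKTS_three
  obtain ⟨r, rfl, ⟨Q⟩⟩ := hRDS.exists_framedQuadrupleSystem hv
  simpa using Q.existsLKTS (by simp [hRDS.1.1])
end

section
/- There exists an RDGDD(3, 4, 24) of type 3^8, i.e., a group divisible design GDD(3, 4, 24) of type 3^8 whose derived design at every point is resolvable. -/
open Finset

/-!
The points are the pairs `(x, i)` with `x ∈ ZMod 3` and `i` in the affine space `AG(3, 2)`, and the
groups are the fibres over `i`. Choose a point `a` on each line `{a, b, c}` of the Fano plane. The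
blocks have one point over each element of a plane `{i, i + a, i + b, i + c}` of `AG(3, 2)`, with
first coordinates such that `x i + x (i + a) = x (i + b) + x (i + c)`. Three points of different
groups determine the plane, and then the equation determines the fourth point.

All translations preserve the blocks and they are transitive on the points. So everything can be
checked on the derived design at the origin, consisting of the triples over a line `{a, b, c}` with
`x a = x b + x c`, and one resolution of it, found by computer, suffices.
-/

open scoped Pointwise

theorem existsUnique_mem_and_iff_card_filter {α : Type*} {s : Finset α} {p : α → Prop}
    [DecidablePred p] : (∃! a, a ∈ s ∧ p a) ↔ #(s.filter p) = 1 := by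
  simp only [card_eq_one, singleton_iff_unique_mem, mem_filter]

theorem mem_derivedBlocks {B : Finset (Finset ℕ)} {x : ℕ} {b : Finset ℕ} :
    b ∈ derivedBlocks B x ↔ x ∉ b ∧ insert x b ∈ B := by
  simp only [derivedBlocks, mem_image, mem_filter]
  constructor
  · rintro ⟨c, ⟨hc, hxc⟩, rfl⟩
    exact ⟨notMem_erase x c, by rwa [insert_erase hxc]⟩
  · rintro ⟨hxb, hb⟩
    exact ⟨insert x b, ⟨hb, mem_insert_self x b⟩, erase_insert hxb⟩

theorem erase_mem_derivedBlocks {B : Finset (Finset ℕ)} {x : ℕ} {b : Finset ℕ} (hb : b ∈ B)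
    (hx : x ∈ b) : b.erase x ∈ derivedBlocks B x :=
  mem_derivedBlocks.2 ⟨notMem_erase x b, by rwa [insert_erase hx]⟩

theorem Resolvable.biUnion {Y : Finset ℕ} {r : ℕ} {P : Fin r → Finset (Finset ℕ)}
    (hP : ∀ i, IsParallelClass Y (P i)) (hdisj : ∀ i j, i ≠ j → Disjoint (P i) (P j)) :
    Resolvable Y (univ.biUnion P) := by
  refine ⟨r, P, hP, fun i => subset_biUnion_of_mem P (mem_univ i), fun b hb => ?_⟩
  obtain ⟨i, -, hi⟩ := mem_biUnion.1 hb
  refine ⟨i, hi, fun j hj => ?_⟩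
  by_contra hji
  exact disjoint_left.1 (hdisj j i hji) hj hi

section GroupAction

variable {M : Type*} [Group M] [MulAction M ℕ] {X Y : Finset ℕ} {Gs B Bs : Finset (Finset ℕ)}

theorem derivedBlocks_smul (g : M) (x : ℕ) :
    derivedBlocks (g • B) (g • x) = g • derivedBlocks B x := by
  ext b
  obtain ⟨c, rfl⟩ : ∃ c, g • c = b := ⟨g⁻¹ • b, smul_inv_smul g b⟩
  simp only [mem_derivedBlocks, ← smul_finset_insert, smul_mem_smul_finset_iff]

theorem IsParallelClass.smul (g : M) (h : IsParallelClass Y B) :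
    IsParallelClass (g • Y) (g • B) := by
  refine ⟨fun b hb => ?_, fun y hy => ?_⟩
  · obtain ⟨c, hc, rfl⟩ := mem_smul_finset.1 hb
    exact smul_finset_subset_smul_finset (h.1 c hc)
  · obtain ⟨z, hz, rfl⟩ := mem_smul_finset.1 hy
    refine ((MulAction.toPerm g).existsUnique_congr fun b => ?_).1 (h.2 z hz)
    simp only [MulAction.toPerm_apply, smul_mem_smul_finset_iff]

theorem Resolvable.smul (g : M) (h : Resolvable Y B) : Resolvable (g • Y) (g • B) := by
  obtain ⟨r, P, hclass, hsub, hunique⟩ := h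
  refine ⟨r, fun i => g • P i, fun i => (hclass i).smul g,
    fun i => smul_finset_subset_smul_finset (hsub i), fun b hb => ?_⟩
  obtain ⟨c, hc, rfl⟩ := mem_smul_finset.1 hb
  simpa only [smul_mem_smul_finset_iff] using hunique c hc

variable (M X Gs Bs) in
/-- The group `M` acts by automorphisms on the points, groups and blocks of an incidence structure,
transitively on its points. -/
structure PointTransitive : Prop where
  smul_points : ∀ g : M, g • X = X
  smul_groups : ∀ g : M, g • Gs = Gs
  smul_blocks : ∀ g : M, g • Bs = Bs
  exists_smul_eq : ∀ x ∈ X, ∀ y ∈ X, ∃ g : M, g • x = y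

namespace PointTransitive

theorem smul_mem_groups (h : PointTransitive M X Gs Bs) (g : M) {G : Finset ℕ} :
    g • G ∈ Gs ↔ G ∈ Gs := by
  conv_lhs => rw [← h.smul_groups g, smul_mem_smul_finset_iff]

theorem smul_mem_blocks (h : PointTransitive M X Gs Bs) (g : M) {b : Finset ℕ} :
    g • b ∈ Bs ↔ b ∈ Bs := by
  conv_lhs => rw [← h.smul_blocks g, smul_mem_smul_finset_iff]

theorem smul_subset_points (h : PointTransitive M X Gs Bs) (g : M) {S : Finset ℕ} :
    g • S ⊆ X ↔ S ⊆ X := by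
  conv_lhs => rw [← h.smul_points g, smul_finset_subset_smul_finset_iff]

theorem resolvable_derivedBlocks (h : PointTransitive M X Gs Bs)
    (hgroup : ∀ x ∈ X, ∃! G, G ∈ Gs ∧ x ∈ G) {x₀ x : ℕ} {G₀ G : Finset ℕ} (hx₀ : x₀ ∈ X)
    (hG₀ : G₀ ∈ Gs) (hx₀G₀ : x₀ ∈ G₀) (hres : Resolvable (X \ G₀) (derivedBlocks Bs x₀))
    (hx : x ∈ X) (hG : G ∈ Gs) (hxG : x ∈ G) : Resolvable (X \ G) (derivedBlocks Bs x) := by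
  obtain ⟨g, rfl⟩ := h.exists_smul_eq x₀ hx₀ x hx
  have hGG₀ : G = g • G₀ := (hgroup _ hx).unique ⟨hG, hxG⟩
    ⟨(h.smul_mem_groups g).2 hG₀, smul_mem_smul_finset hx₀G₀⟩
  have hsmul := hres.smul g
  rwa [smul_finset_sdiff, h.smul_points, ← hGG₀, ← derivedBlocks_smul, h.smul_blocks] at hsmul

end PointTransitive

end GroupAction

section Derived

variable {t g n x₀ : ℕ} {K : Set ℕ} {X G₀ : Finset ℕ} {Gs Bs : Finset (Finset ℕ)}

theorem existsUnique_group_of_isGDD_erase {Bs' : Finset (Finset ℕ)}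
    (hG₀ : G₀ ∈ Gs) (hGDD : IsGDD t K g n (X \ G₀) (Gs.erase G₀) Bs') {x : ℕ} (hx : x ∈ X) :
    ∃! G, G ∈ Gs ∧ x ∈ G := by
  obtain ⟨-, -, hgroups, hpartition, -⟩ := hGDD
  by_cases hxG₀ : x ∈ G₀
  · refine ⟨G₀, ⟨hG₀, hxG₀⟩, fun G ⟨hG, hxG⟩ => ?_⟩
    by_contra hne
    exact (mem_sdiff.1 ((hgroups G (mem_erase.2 ⟨hne, hG⟩)).1 hxG)).2 hxG₀
  · obtain ⟨G, ⟨hG, hxG⟩, hunique⟩ := hpartition x (mem_sdiff.2 ⟨hx, hxG₀⟩)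
    refine ⟨G, ⟨mem_of_mem_erase hG, hxG⟩, fun G' ⟨hG', hxG'⟩ => hunique G' ⟨?_, hxG'⟩⟩
    exact mem_erase.2 ⟨fun heq => hxG₀ (heq ▸ hxG'), hG'⟩

theorem existsUnique_block_of_isGDD_derivedBlocks (hG₀ : G₀ ∈ Gs) (hx₀ : x₀ ∈ G₀)
    (hGDD : IsGDD t K g n (X \ G₀) (Gs.erase G₀) (derivedBlocks Bs x₀))
    {T : Finset ℕ} (hT : T ⊆ X) (hcard : #T = t + 1)
    (htrans : ∀ G ∈ Gs, #(T ∩ G) ≤ 1) (hx₀T : x₀ ∈ T) : ∃! b, b ∈ Bs ∧ T ⊆ b := by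
  obtain ⟨-, -, -, -, -, -, hcover⟩ := hGDD
  have hsub : T.erase x₀ ⊆ X \ G₀ := fun y hy => by
    obtain ⟨hne, hyT⟩ := mem_erase.1 hy
    refine mem_sdiff.2 ⟨hT hyT, fun hyG₀ => hne ?_⟩
    exact card_le_one.1 (htrans G₀ hG₀) y (mem_inter.2 ⟨hyT, hyG₀⟩) x₀ (mem_inter.2 ⟨hx₀T, hx₀⟩)
  have herase : #(T.erase x₀) = t := by rw [card_erase_of_mem hx₀T, hcard, Nat.add_sub_cancel]
  obtain ⟨c, ⟨hc, hTc⟩, hunique⟩ := hcover _ hsub herase fun G hG =>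
    (card_le_card (inter_subset_inter_right (erase_subset x₀ T))).trans
      (htrans G (mem_of_mem_erase hG))
  obtain ⟨-, hcBs⟩ := mem_derivedBlocks.1 hc
  refine ⟨insert x₀ c, ⟨hcBs, subset_insert_iff.2 hTc⟩, fun b ⟨hb, hTb⟩ => ?_⟩
  have hx₀b := hTb hx₀T
  rw [← hunique _ ⟨erase_mem_derivedBlocks hb hx₀b, erase_subset_erase x₀ hTb⟩, insert_erase hx₀b]

variable {M : Type*} [Group M] [MulAction M ℕ]

namespace PointTransitive

theorem card_block_inter_group_le_one (h : PointTransitive M X Gs Bs) (hx₀X : x₀ ∈ X)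
    (hgroup : ∃! G, G ∈ Gs ∧ x₀ ∈ G) (hG₀ : G₀ ∈ Gs) (hx₀ : x₀ ∈ G₀)
    (hdisj : ∀ b ∈ derivedBlocks Bs x₀, Disjoint b G₀) {b G : Finset ℕ} (hb : b ∈ Bs)
    (hbX : b ⊆ X) (hG : G ∈ Gs) : #(b ∩ G) ≤ 1 := by
  refine card_le_one.2 fun y hy z hz => ?_
  obtain ⟨hyb, hyG⟩ := mem_inter.1 hy
  obtain ⟨hzb, hzG⟩ := mem_inter.1 hz
  obtain ⟨g, hgy⟩ := h.exists_smul_eq y (hbX hyb) x₀ hx₀X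
  have hgG : g • G = G₀ := hgroup.unique
    ⟨(h.smul_mem_groups g).2 hG, hgy ▸ smul_mem_smul_finset hyG⟩ ⟨hG₀, hx₀⟩
  have hgb : (g • b).erase x₀ ∈ derivedBlocks Bs x₀ :=
    erase_mem_derivedBlocks ((h.smul_mem_blocks g).2 hb) (hgy ▸ smul_mem_smul_finset hyb)
  by_contra hyz
  have hgz : g • z ∈ (g • b).erase x₀ := mem_erase.2
    ⟨fun heq => hyz (MulAction.injective g (hgy.trans heq.symm)), smul_mem_smul_finset hzb⟩
  exact disjoint_left.1 (hdisj _ hgb) hgz (hgG ▸ smul_mem_smul_finset hzG)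

theorem block_subset_and_card_mem (h : PointTransitive M X Gs Bs) (hx₀X : x₀ ∈ X)
    (hderived : ∀ b ∈ derivedBlocks Bs x₀, b ⊆ X ∧ #b ∈ K)
    {b : Finset ℕ} (hb : b ∈ Bs) (hbX : (b ∩ X).Nonempty) :
    b ⊆ X ∧ #b ∈ (· + 1) '' K := by
  obtain ⟨y, hy⟩ := hbX
  obtain ⟨hyb, hyX⟩ := mem_inter.1 hy
  obtain ⟨g, hgy⟩ := h.exists_smul_eq y hyX x₀ hx₀X
  have hx₀b : x₀ ∈ g • b := hgy ▸ smul_mem_smul_finset hyb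
  obtain ⟨hsub, hcard⟩ :=
    hderived _ (erase_mem_derivedBlocks ((h.smul_mem_blocks g).2 hb) hx₀b)
  refine ⟨(h.smul_subset_points g).1 ?_, #((g • b).erase x₀), hcard, ?_⟩
  · rw [← insert_erase hx₀b]
    exact insert_subset hx₀X hsub
  · exact (card_erase_add_one hx₀b).trans (card_smul_finset g b)

theorem existsUnique_block (h : PointTransitive M X Gs Bs) (hx₀X : x₀ ∈ X) (hG₀ : G₀ ∈ Gs)
    (hx₀ : x₀ ∈ G₀) (hGDD : IsGDD t K g n (X \ G₀) (Gs.erase G₀) (derivedBlocks Bs x₀))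
    {T : Finset ℕ} (hT : T ⊆ X) (hcard : #T = t + 1)
    (htrans : ∀ G ∈ Gs, #(T ∩ G) ≤ 1) : ∃! b, b ∈ Bs ∧ T ⊆ b := by
  obtain ⟨y, hy⟩ : T.Nonempty := card_pos.1 (by omega)
  obtain ⟨g, hgy⟩ := h.exists_smul_eq y (hT hy) x₀ hx₀X
  have hgtrans : ∀ G ∈ Gs, #(g • T ∩ G) ≤ 1 := fun G hG => by
    rw [← smul_inv_smul g G, ← smul_finset_inter, card_smul_finset]
    exact htrans _ ((h.smul_mem_groups g⁻¹).2 hG)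
  have hgT := existsUnique_block_of_isGDD_derivedBlocks hG₀ hx₀ hGDD
    ((h.smul_subset_points g).2 hT) (by rwa [card_smul_finset]) hgtrans
    (hgy ▸ smul_mem_smul_finset hy)
  refine ((MulAction.toPerm g).existsUnique_congr fun b => ?_).2 hgT
  rw [MulAction.toPerm_apply, h.smul_mem_blocks, smul_finset_subset_smul_finset_iff]

theorem isGDD_succ (h : PointTransitive M X Gs Bs) (hG₀ : G₀ ∈ Gs) (hG₀X : G₀ ⊆ X)
    (hG₀card : #G₀ = g) (hx₀ : x₀ ∈ G₀) (hBs : ∀ b ∈ Bs, (b ∩ X).Nonempty)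
    (hGDD : IsGDD t K g n (X \ G₀) (Gs.erase G₀) (derivedBlocks Bs x₀)) :
    IsGDD (t + 1) ((· + 1) '' K) g (n + 1) X Gs Bs := by
  have hx₀X := hG₀X hx₀
  have ⟨hXcard, hGscard, hgroups, _, hblocks, _⟩ := hGDD
  have hpartition : ∀ x ∈ X, ∃! G, G ∈ Gs ∧ x ∈ G :=
    fun x hx => existsUnique_group_of_isGDD_erase hG₀ hGDD hx
  have hBlocks : ∀ b ∈ Bs, b ⊆ X ∧ #b ∈ (· + 1) '' K := fun b hb =>
    h.block_subset_and_card_mem hx₀X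
      (fun c hc => ⟨(hblocks c hc).1.trans sdiff_subset, (hblocks c hc).2⟩) hb (hBs b hb)
  refine ⟨?_, ?_, fun G hG => ?_, hpartition, hBlocks, fun b hb G hG => ?_,
    fun T hT hcard htrans => h.existsUnique_block hx₀X hG₀ hx₀ hGDD hT hcard htrans⟩
  · rw [← card_sdiff_add_card_eq_card hG₀X, hXcard, hG₀card, Nat.mul_succ]
  · rw [← card_erase_add_one hG₀, hGscard]
  · by_cases hGG₀ : G = G₀
    · exact hGG₀ ▸ ⟨hG₀X, hG₀card⟩
    · obtain ⟨hsub, hcard⟩ := hgroups G (mem_erase.2 ⟨hGG₀, hG⟩)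
      exact ⟨hsub.trans sdiff_subset, hcard⟩
  · exact h.card_block_inter_group_le_one hx₀X (hpartition x₀ hx₀X) hG₀ hx₀
      (fun c hc => disjoint_of_subset_left (hblocks c hc).1 sdiff_disjoint) hb (hBlocks b hb).1 hG

theorem isRDGDD_succ (h : PointTransitive M X Gs Bs) (hG₀ : G₀ ∈ Gs) (hG₀X : G₀ ⊆ X)
    (hG₀card : #G₀ = g) (hx₀ : x₀ ∈ G₀) (hBs : ∀ b ∈ Bs, (b ∩ X).Nonempty)
    (hGDD : IsGDD t K g n (X \ G₀) (Gs.erase G₀) (derivedBlocks Bs x₀))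
    (hres : Resolvable (X \ G₀) (derivedBlocks Bs x₀)) :
    IsRDGDD (t + 1) ((· + 1) '' K) g (n + 1) X Gs Bs :=
  ⟨h.isGDD_succ hG₀ hG₀X hG₀card hx₀ hBs hGDD, fun _ hx _ hG hxG =>
    h.resolvable_derivedBlocks (fun _ hy => existsUnique_group_of_isGDD_erase hG₀ hGDD hy)
      (hG₀X hx₀) hG₀ hx₀ hres hx hG hxG⟩

end PointTransitive

end Derived

section Development

variable (M : Type*) [Group M] [MulAction M ℕ] [Fintype M]

/-- The development of the base blocks `{x₀} ∪ c`, `c ∈ C`, under the finite group `M`: all their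
images. -/
def development (x₀ : ℕ) (C : Finset (Finset ℕ)) : Finset (Finset ℕ) :=
  (univ : Finset M) • C.image (insert x₀)

variable {M} {x₀ : ℕ} {C : Finset (Finset ℕ)}

theorem mem_development {b : Finset ℕ} :
    b ∈ development M x₀ C ↔ ∃ g : M, ∃ c ∈ C, g • insert x₀ c = b := by
  simp [development, mem_smul]

theorem smul_development (g : M) : g • development M x₀ C = development M x₀ C := by
  classical rw [development, ← smul_assoc, smul_finset_univ]

theorem inter_nonempty_of_mem_development {X b : Finset ℕ} (hX : ∀ g : M, g • X = X)
    (hx₀ : x₀ ∈ X) (hb : b ∈ development M x₀ C) : (b ∩ X).Nonempty := by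
  obtain ⟨g, c, -, rfl⟩ := mem_development.1 hb
  refine ⟨g • x₀, mem_inter.2 ⟨smul_mem_smul_finset (mem_insert_self x₀ c), ?_⟩⟩
  exact hX g ▸ smul_mem_smul_finset hx₀

theorem derivedBlocks_development (hx₀ : ∀ c ∈ C, x₀ ∉ c)
    (hC : ∀ g : M, ∀ c ∈ C, x₀ ∈ g • insert x₀ c → (g • insert x₀ c).erase x₀ ∈ C) :
    derivedBlocks (development M x₀ C) x₀ = C := by
  ext b
  rw [mem_derivedBlocks, mem_development]
  refine ⟨?_, fun hb => ⟨hx₀ b hb, 1, b, hb, one_smul M _⟩⟩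
  rintro ⟨hx₀b, g, c, hc, hgc⟩
  have herase := hC g c hc (hgc ▸ mem_insert_self x₀ b)
  rwa [hgc, erase_insert hx₀b] at herase

end Development

section Construction

/-- The group of translations of `ZMod 3 × AG(3, 2)`, written multiplicatively. -/
abbrev TranslationGroup : Type := Multiplicative (ZMod 3 × ZMod 2 × ZMod 2 × ZMod 2)

/-- The numbering of the points of `ZMod 3 × AG(3, 2)`: the point `(x, i₂, i₁, i₀)` gets the number
`8 * x + 4 * i₂ + 2 * i₁ + i₀`. -/
def pointEquiv : TranslationGroup ≃ Fin 24 :=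
  Multiplicative.toAdd.trans <|
    ((Equiv.refl (Fin 3)).prodCongr <|
      ((Equiv.refl (Fin 2)).prodCongr finProdFinEquiv).trans finProdFinEquiv).trans finProdFinEquiv

/-- The translations acting on the numbers of the points; numbers from `24` on are fixed. -/
instance translationAction : MulAction TranslationGroup ℕ :=
  MulAction.compHom ℕ <| (Equiv.Perm.extendDomainHom (Fin.equivSubtype (n := 24))).comp <|
    pointEquiv.permCongrHom.toMonoidHom.comp (MulAction.toPermHom TranslationGroup TranslationGroup)

/-- The groups of the design: the fibres over the points of `AG(3, 2)`. -/
def pointGroups : Finset (Finset ℕ) := (range 8).image fun i => {i, 8 + i, 16 + i}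

/-- A resolution of the derived design at the point `0`. Every class has one triple `{a, b, c}` over
each of the lines `{1, 2, 3}`, `{1, 4, 5}`, `{1, 6, 7}`, `{2, 4, 6}`, `{2, 5, 7}`, `{3, 4, 7}` and
`{5, 3, 6}` of the Fano plane, in this order and with the chosen point first. -/
def parallelClasses : Fin 9 → Finset (Finset ℕ) :=
  ![{{1, 2, 3}, {9, 12, 5}, {17, 14, 15}, {18, 4, 22}, {10, 21, 23}, {19, 20, 7}, {13, 11, 6}},
    {{9, 2, 11}, {1, 4, 5}, {17, 6, 23}, {10, 20, 22}, {18, 21, 7}, {19, 12, 15}, {13, 3, 14}},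
    {{17, 2, 19}, {9, 4, 13}, {1, 14, 23}, {18, 20, 6}, {10, 5, 15}, {11, 12, 7}, {21, 3, 22}},
    {{9, 10, 3}, {17, 4, 21}, {1, 6, 7}, {2, 12, 22}, {18, 13, 15}, {11, 20, 23}, {5, 19, 14}},
    {{17, 10, 11}, {1, 12, 21}, {9, 6, 15}, {2, 20, 14}, {18, 5, 23}, {3, 4, 7}, {13, 19, 22}},
    {{1, 10, 19}, {9, 20, 21}, {17, 22, 7}, {18, 12, 14}, {2, 13, 23}, {11, 4, 15}, {5, 3, 6}},
    {{17, 18, 3}, {1, 20, 13}, {9, 14, 7}, {10, 12, 6}, {2, 21, 15}, {19, 4, 23}, {5, 11, 22}},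
    {{1, 18, 11}, {17, 12, 13}, {9, 22, 23}, {10, 4, 14}, {2, 5, 7}, {3, 20, 15}, {21, 19, 6}},
    {{9, 18, 19}, {17, 20, 5}, {1, 22, 15}, {2, 4, 6}, {10, 13, 7}, {3, 12, 23}, {21, 11, 14}}]

/-- The blocks of the derived design at the point `0`. -/
def baseTriples : Finset (Finset ℕ) := univ.biUnion parallelClasses

theorem isParallelClass_parallelClasses (i : Fin 9) :
    IsParallelClass (range 24 \ {0, 8, 16}) (parallelClasses i) := by
  have hsub : ∀ i, ∀ b ∈ parallelClasses i, b ⊆ range 24 \ {0, 8, 16} := by decide +kernel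
  have hcover : ∀ i, ∀ y ∈ range 24 \ {0, 8, 16}, #{b ∈ parallelClasses i | y ∈ b} = 1 := by
    decide +kernel
  exact ⟨hsub i, fun y hy => existsUnique_mem_and_iff_card_filter.2 (hcover i y hy)⟩

theorem resolvable_baseTriples : Resolvable (range 24 \ {0, 8, 16}) baseTriples :=
  Resolvable.biUnion isParallelClass_parallelClasses (by decide +kernel)

theorem isGDD_baseTriples :
    IsGDD 2 {3} 3 7 (range 24 \ {0, 8, 16}) (pointGroups.erase {0, 8, 16}) baseTriples := by
  have hpartition : ∀ x ∈ range 24 \ {0, 8, 16},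
      #{G ∈ pointGroups.erase {0, 8, 16} | x ∈ G} = 1 := by decide +kernel
  have hpairs : ∀ T ∈ powersetCard 2 (range 24 \ {0, 8, 16}),
      (∀ G ∈ pointGroups.erase {0, 8, 16}, #(T ∩ G) ≤ 1) → #{b ∈ baseTriples | T ⊆ b} = 1 := by
    decide +kernel
  refine ⟨by decide +kernel, by decide +kernel, by decide +kernel,
    fun x hx => existsUnique_mem_and_iff_card_filter.2 (hpartition x hx), ?_,
    by decide +kernel, fun T hT hcard htrans => ?_⟩
  · simp only [Set.mem_singleton_iff]
    decide +kernel
  · exact existsUnique_mem_and_iff_card_filter.2 (hpairs T (mem_powersetCard.2 ⟨hT, hcard⟩) htrans)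

theorem erase_smul_insert_mem_baseTriples : ∀ g : TranslationGroup, ∀ b ∈ baseTriples,
    0 ∈ g • insert 0 b → (g • insert 0 b).erase 0 ∈ baseTriples := by
  decide +kernel

theorem derivedBlocks_development_baseTriples :
    derivedBlocks (development TranslationGroup 0 baseTriples) 0 = baseTriples :=
  derivedBlocks_development (by decide +kernel) erase_smul_insert_mem_baseTriples

theorem pointTransitive_translationGroup : PointTransitive TranslationGroup (range 24) pointGroups
    (development TranslationGroup 0 baseTriples) where
  smul_points := by decide +kernel
  smul_groups := by decide +kernel
  smul_blocks := smul_development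
  exists_smul_eq x hx y hy := by
    have hzero : ∀ z ∈ range 24, ∃ g : TranslationGroup, g • z = 0 := by decide +kernel
    obtain ⟨g, hg⟩ := hzero x hx
    obtain ⟨h, hh⟩ := hzero y hy
    exact ⟨h⁻¹ * g, by rw [mul_smul, hg, inv_smul_eq_iff, hh]⟩

end Construction

/-- There exists an RDGDD(3, 4, 24) of type 3^8. -/
theorem stmt_2 : ∃ X Gs Bs, IsRDGDD 3 {4} 3 8 X Gs Bs := by
  refine ⟨range 24, pointGroups, development TranslationGroup 0 baseTriples, ?_⟩
  have hpoints := pointTransitive_translationGroup.smul_points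
  have hderived := derivedBlocks_development_baseTriples
  have hsucc : ((· + 1) '' {3} : Set ℕ) = {4} := Set.image_singleton
  rw [← hsucc]
  exact pointTransitive_translationGroup.isRDGDD_succ (x₀ := 0) (G₀ := {0, 8, 16})
    (by decide) (by decide) rfl (by decide)
    (fun b hb => inter_nonempty_of_mem_development hpoints (by decide) hb)
    (hderived.symm ▸ isGDD_baseTriples) (hderived.symm ▸ resolvable_baseTriples)
end
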